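/- arXiv:2003.11261 — 3 statements merged into one kernel-verified Lean document; each statement's English description precedes it below -/
import Mathlib

section
/- Let A be an abelian category and U ⊆ A a non-empty full subcategory closed under subobjects, quotients, and extensions. Assume that for any epimorphism A ↠ U in A with U ∈ U there is a subobject V ⊆ A with V ∈ U such that V → A → U is an epimorphism. Then the induced triangulated functor D^abs(U) → D^abs(A) between absolute derived categories is fully faithful. -/
open CategoryTheory CategoryTheory.Limits CategoryTheory.Pretriangulated

variable {A : Type u} [Category.{v} A] [Abelian A]

/-- The totalization of a (short exact) sequence of complexes `K ⟶ L ⟶ M`, realized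
(up to isomorphism in the homotopy category) as a shifted mapping cone of the canonical
map `Cone(f) ⟶ M`. -/
noncomputable def totSES {K L M : CochainComplex A ℤ} (f : K ⟶ L) (g : L ⟶ M)
    (hfg : f ≫ g = 0) : CochainComplex A ℤ :=
  (CochainComplex.mappingCone
    (CochainComplex.mappingCone.desc f 0 g (by simp [hfg])))⟦(-1 : ℤ)⟧

/-- A class of objects of the homotopy category which contains the totalizations of all
degreewise short exact sequences of complexes and is thick: closed under isomorphisms,
zero objects, shifts, extensions (cones) and direct summands. -/
structure TotClosed (P : HomotopyCategory A (ComplexShape.up ℤ) → Prop) : Prop where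
  tot : ∀ {K L M : CochainComplex A ℤ} (f : K ⟶ L) (g : L ⟶ M) (hfg : f ≫ g = 0),
    (ShortComplex.mk f g hfg).ShortExact →
    P ((HomotopyCategory.quotient A (ComplexShape.up ℤ)).obj (totSES f g hfg))
  zero : ∀ (X : HomotopyCategory A (ComplexShape.up ℤ)), IsZero X → P X
  iso : ∀ {X Y : HomotopyCategory A (ComplexShape.up ℤ)}, (X ≅ Y) → P X → P Y
  shift : ∀ (X : HomotopyCategory A (ComplexShape.up ℤ)) (n : ℤ), P X → P (X⟦n⟧)
  ext₂ : ∀ (T : Triangle (HomotopyCategory A (ComplexShape.up ℤ))),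
    T ∈ distinguishedTriangles → P T.obj₁ → P T.obj₃ → P T.obj₂
  smd : ∀ (X Y : HomotopyCategory A (ComplexShape.up ℤ)), P (X ⊞ Y) → P X

/-- A complex is absolutely acyclic if its image in the homotopy category belongs to
the minimal thick subcategory containing the totalizations of short exact sequences. -/
def IsAbsolutelyAcyclic (X : HomotopyCategory A (ComplexShape.up ℤ)) : Prop :=
  ∀ P, TotClosed P → P X

variable (A) in
/-- The class of morphisms of the homotopy category whose cone is absolutely acyclic;
the absolute derived category `D^abs(A)` is the localization of `K(A)` at this class
(equivalently, the Verdier quotient by the absolutely acyclic complexes). -/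
def absW : MorphismProperty (HomotopyCategory A (ComplexShape.up ℤ)) := fun X Y f =>
  ∃ (Z : HomotopyCategory A (ComplexShape.up ℤ)) (g : Y ⟶ Z) (h : Z ⟶ X⟦(1 : ℤ)⟧),
    Triangle.mk f g h ∈ distinguishedTriangles ∧ IsAbsolutelyAcyclic Z

set_option linter.unusedSectionVars false

section Abstract

variable {C T : Type*} [Category* C] [Category* T]
  [HasZeroObject C] [HasShift C ℤ] [Preadditive C]
  [∀ (n : ℤ), (shiftFunctor C n).Additive] [Pretriangulated C] [IsTriangulated C]
  [HasZeroObject T] [HasShift T ℤ] [Preadditive T]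
  [∀ (n : ℤ), (shiftFunctor T n).Additive] [Pretriangulated T] [IsTriangulated T]

/-- An object `Z` of `T` such that any morphism `Φ X ⟶ Z` is annihilated by (the image of)
a morphism with cone in `N`. -/
def FacCond (Φ : C ⥤ T) (N : ObjectProperty C) (Z : T) : Prop :=
  ∀ (X : C) (f : Φ.obj X ⟶ Z), ∃ (X' : C) (s : X' ⟶ X), N.trW s ∧ Φ.map s ≫ f = 0

lemma facCond_of_fac (Φ : C ⥤ T) [Φ.CommShift ℤ] [Φ.IsTriangulated]
    (N : ObjectProperty C) (Z : T)
    (hZ : ∀ (X : C) (f : Φ.obj X ⟶ Z), ∃ (Z' : C) (a : X ⟶ Z') (b : Φ.obj Z' ⟶ Z),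
      N Z' ∧ Φ.map a ≫ b = f) : FacCond Φ N Z := by
  intro X f
  obtain ⟨Z', a, b, hZ', fac⟩ := hZ X f
  obtain ⟨X', s', w, hT'⟩ := distinguished_cocone_triangle₁ a
  have h0 : s' ≫ a = 0 := comp_distTriang_mor_zero₁₂ _ hT'
  exact ⟨X', s', ⟨_, _, _, hT', hZ'⟩, by
    rw [← fac, ← Category.assoc, ← Φ.map_comp, h0, Φ.map_zero, zero_comp]⟩

lemma exists_refine (Φ : C ⥤ T) (N : ObjectProperty C) (M : ObjectProperty T)
    (hM : ∀ Z, M Z → FacCond Φ N Z) {X : C} {Y : T} (s : Y ⟶ Φ.obj X) (hs : M.trW s) :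
    ∃ (X' : C) (s' : X' ⟶ X) (t : Φ.obj X' ⟶ Y), N.trW s' ∧ t ≫ s = Φ.map s' := by
  obtain ⟨Z, g, h, hT, hZ⟩ := hs
  obtain ⟨X', s', hs', h0⟩ := hM Z hZ X g
  obtain ⟨t, ht⟩ := Triangle.coyoneda_exact₂ _ hT (Φ.map s') h0
  exact ⟨X', s', t, hs', ht.symm⟩

lemma fullyFaithful_of_facCond {D₁ D₂ : Type*} [Category* D₁] [Category* D₂]
    (Φ : C ⥤ T) [Φ.CommShift ℤ] [Φ.IsTriangulated] [Φ.Full] [Φ.Faithful]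
    (N : ObjectProperty C) [N.IsTriangulated] (M : ObjectProperty T) [M.IsTriangulated]
    (hM : ∀ Z, M Z → FacCond Φ N Z)
    (L₁ : C ⥤ D₁) (L₂ : T ⥤ D₂) [L₁.IsLocalization N.trW] [L₂.IsLocalization M.trW]
    (F : D₁ ⥤ D₂) (e : Φ ⋙ L₂ ≅ L₁ ⋙ F) : F.Full ∧ F.Faithful := by
  have : L₁.EssSurj := Localization.essSurj L₁ N.trW
  constructor
  · refine F.full_of_comp_essSurj L₁ (fun X₁ X₂ φ ↦ ?_)
    obtain ⟨φ', hφ'⟩ : ∃ φ', φ = e.inv.app X₁ ≫ φ' ≫ e.hom.app X₂ :=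
      ⟨e.hom.app X₁ ≫ φ ≫ e.inv.app X₂, by
        have h1 := e.inv_hom_id_app X₁
        have h2 := e.inv_hom_id_app X₂
        dsimp at h1 h2 ⊢
        simp only [Category.assoc, h2, Category.comp_id]
        rw [← Category.assoc, h1, Category.id_comp]⟩
    obtain ⟨f, hf⟩ := Localization.exists_rightFraction L₂ M.trW φ'
    obtain ⟨X₃, s', t, hs', fac⟩ := exists_refine Φ N M hM f.s f.hs
    let g : N.trW.RightFraction X₁ X₂ :=
      { X' := X₃
        f := Φ.preimage (t ≫ f.f)
        s := s'
        hs := hs' }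
    have := Localization.inverts L₁ _ _ g.hs
    refine ⟨g.map L₁ (Localization.inverts _ _), ?_⟩
    rw [← cancel_epi (F.map (L₁.map g.s)), ← Functor.map_comp,
      MorphismProperty.RightFraction.map_s_comp_map]
    have n1 := e.hom.naturality g.f
    have n2 := e.inv.naturality g.s
    dsimp at n1 n2
    have h3 : L₂.map f.s ≫ φ' = L₂.map f.f := by
      rw [hf, MorphismProperty.RightFraction.map_s_comp_map]
    rw [hφ', reassoc_of% n2]
    dsimp only [g]
    rw [← fac, L₂.map_comp, Category.assoc, reassoc_of% h3, ← L₂.map_comp_assoc]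
    have h4 := e.inv_hom_id_app X₃
    dsimp [g] at n1 h4
    rw [Φ.map_preimage] at n1
    rw [n1, reassoc_of% h4]
  · let := Localization.preadditive L₁ N.trW
    let := Localization.preadditive L₂ M.trW
    have := Localization.functor_additive L₁ N.trW
    have := Localization.functor_additive L₂ M.trW
    have : F.Additive := by
      rw [Localization.functor_additive_iff L₁ N.trW]
      exact Functor.additive_of_iso e
    refine Functor.faithful_of_comp_cancel_zero_of_hasLeftCalculusOfFractions L₁
      N.trW F (fun X₁ X₂ f hf ↦ ?_)
    replace hf : L₂.map (Φ.map f) = L₂.map 0 := by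
      have n1 := e.hom.naturality f
      dsimp at n1
      rw [hf, comp_zero] at n1
      rw [← cancel_mono (e.hom.app X₂), L₂.map_zero, zero_comp]
      exact n1
    rw [MorphismProperty.map_eq_iff_precomp L₂ M.trW] at hf
    obtain ⟨X₃, s, hs, fac⟩ := hf
    obtain ⟨X₄, s', t, hs', fac'⟩ := exists_refine Φ N M hM s hs
    have := Localization.inverts L₁ _ _ hs'
    rw [← cancel_epi (L₁.map s'), comp_zero, ← L₁.map_comp, ← L₁.map_zero]
    congr 1
    apply Φ.map_injective
    rw [Φ.map_comp, ← fac', Category.assoc, fac]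
    simp

lemma facCond_zero (Φ : C ⥤ T) (N : ObjectProperty C) [N.IsTriangulated] (Z : T) (hZ : IsZero Z) :
    FacCond Φ N Z := by
  intro X f
  exact ⟨X, 𝟙 X, N.trW_of_isIso _, hZ.eq_of_tgt _ _⟩

lemma facCond_retract (Φ : C ⥤ T) (N : ObjectProperty C) {Z Y : T} (i : Z ⟶ Y) (r : Y ⟶ Z)
    (hir : i ≫ r = 𝟙 Z) (hY : FacCond Φ N Y) : FacCond Φ N Z := by
  intro X f
  obtain ⟨X', s, hs, h0⟩ := hY X (f ≫ i)
  refine ⟨X', s, hs, ?_⟩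
  have := h0 =≫ r
  simpa [hir] using this

lemma facCond_shift (Φ : C ⥤ T) [Φ.CommShift ℤ] (N : ObjectProperty C) [N.IsTriangulated]
    (Z : T) (n : ℤ) (hZ : FacCond Φ N Z) : FacCond Φ N (Z⟦n⟧) := by
  intro X f
  let e := (shiftFunctorCompIsoId C (-n) n (by lia)).app X
  let e' := (Φ.commShiftIso n).app (X⟦-n⟧)
  obtain ⟨g, hg⟩ := (shiftFunctor T n).map_surjective (e'.inv ≫ Φ.map e.hom ≫ f)
  obtain ⟨X', s, hs, h0⟩ := hZ _ g
  refine ⟨X'⟦n⟧, s⟦n⟧' ≫ e.hom, N.trW.comp_mem _ _ (hs.shift n) (N.trW_of_isIso _), ?_⟩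
  have := Φ.commShiftIso_hom_naturality s n
  have h1 : (Φ.map s)⟦n⟧' ≫ g⟦n⟧' = 0 := by
    rw [← Functor.map_comp, h0, Functor.map_zero]
  rw [hg] at h1
  have h2 : Φ.map (s⟦n⟧') = (Φ.commShiftIso n).hom.app _ ≫ (Φ.map s)⟦n⟧' ≫ e'.inv := by
    rw [← Category.assoc, ← this, Category.assoc]
    change _ = _ ≫ e'.hom ≫ e'.inv
    simp
  rw [Φ.map_comp, h2]
  simp only [Category.assoc]
  rw [h1, comp_zero]

lemma facCond_ext (Φ : C ⥤ T) (N : ObjectProperty C) [N.IsTriangulated]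
    (S : Triangle T) (hS : S ∈ distinguishedTriangles)
    (h₁ : FacCond Φ N S.obj₁) (h₃ : FacCond Φ N S.obj₃) :
    FacCond Φ N S.obj₂ := by
  intro X f
  obtain ⟨X', s, hs, h0⟩ := h₃ X (f ≫ S.mor₂)
  obtain ⟨c, hc⟩ := Triangle.coyoneda_exact₂ _ hS (Φ.map s ≫ f) (by rw [Category.assoc, h0])
  obtain ⟨X'', t, ht, h0'⟩ := h₁ X' c
  exact ⟨X'', t ≫ s, N.trW.comp_mem _ _ ht hs, by
    rw [Φ.map_comp, Category.assoc, hc, ← Category.assoc, h0', zero_comp]⟩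

end Abstract

section Concrete

open CochainComplex CochainComplex.HomComplex HomologicalComplex

/-- The subcomplex generated by a family of maps. -/
lemma exists_generated {A : Type u} [Category.{v} A] [Abelian A] (P : A → Prop)
    (hquot : ∀ {X Y : A} (f : X ⟶ Y), Epi f → P X → P Y)
    (hext : ∀ (S : ShortComplex A), S.ShortExact → P S.X₁ → P S.X₃ → P S.X₂)
    (L : CochainComplex A ℤ) (V : ℤ → A) (hV : ∀ n, P (V n)) (w : ∀ n, V n ⟶ L.X n) :
    ∃ (L' : CochainComplex A ℤ) (l : L' ⟶ L), Mono l ∧ (∀ n, P (L'.X n)) ∧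
      ∀ n, ∃ y : V n ⟶ L'.X n, y ≫ l.f n = w n := by
  let E : CochainComplex A ℤ :=
    { X := fun p => V (p - 1)
      d := fun _ _ => 0 }
  let α : Cochain E L (-1) :=
    Cochain.mk (fun p q hpq => eqToHom (congrArg V (by lia : p - 1 = q)) ≫ w q)
  let β : E ⟶ L := Cocycle.homOf (Cocycle.mk (δ (-1) 0 α) 1 (by simp) (δ_δ _ _ _ _))
  let D := mappingCone.desc (𝟙 E) α β (by simp [β])
  refine ⟨Abelian.image D, Abelian.image.ι D, inferInstance, fun n => ?_, fun n => ?_⟩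
  · refine hquot ((Abelian.factorThruImage D).f n) inferInstance ?_
    exact hext _ (mappingCone.triangleRotateShortComplexSplitting (𝟙 E) n).shortExact
      (hV _) (hV _)
  · refine ⟨eqToHom (congrArg V (by lia)) ≫ (mappingCone.inl (𝟙 E)).v (n + 1) n (by lia) ≫
      (Abelian.factorThruImage D).f n, ?_⟩
    have h1 : (Abelian.factorThruImage D).f n ≫ (Abelian.image.ι D).f n = D.f n := by
      rw [← HomologicalComplex.comp_f, Abelian.image.fac]
    rw [Category.assoc, Category.assoc, h1]
    dsimp only [D]
    rw [mappingCone.inl_v_desc_f]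
    dsimp only [α]
    rw [Cochain.mk_v]
    simp

/-- Existence of enough short exact subsequences with terms in `P`. -/
lemma exists_subSES {A : Type u} [Category.{v} A] [Abelian A] (P : A → Prop)
    (hsub : ∀ {X Y : A} (f : X ⟶ Y), Mono f → P Y → P X)
    (hquot : ∀ {X Y : A} (f : X ⟶ Y), Epi f → P X → P Y)
    (hext : ∀ (S : ShortComplex A), S.ShortExact → P S.X₁ → P S.X₃ → P S.X₂)
    (hlift : ∀ {B U : A} (p : B ⟶ U), Epi p → P U →
      ∃ (V : A) (v : V ⟶ B), Mono v ∧ P V ∧ Epi (v ≫ p))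
    (S : ShortComplex (CochainComplex A ℤ)) (hS : S.ShortExact)
    (VA VB VC : ℤ → A) (hVA : ∀ n, P (VA n)) (hVB : ∀ n, P (VB n)) (hVC : ∀ n, P (VC n))
    (a : ∀ n, VA n ⟶ S.X₁.X n) (b : ∀ n, VB n ⟶ S.X₂.X n) (c : ∀ n, VC n ⟶ S.X₃.X n) :
    ∃ (S' : ShortComplex (CochainComplex A ℤ)) (j : S' ⟶ S), S'.ShortExact ∧
      Mono j.τ₁ ∧ Mono j.τ₂ ∧ Mono j.τ₃ ∧
      (∀ n, P (S'.X₁.X n)) ∧ (∀ n, P (S'.X₂.X n)) ∧ (∀ n, P (S'.X₃.X n)) ∧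
      (∀ n, ∃ y : VA n ⟶ S'.X₁.X n, y ≫ j.τ₁.f n = a n) ∧
      (∀ n, ∃ y : VB n ⟶ S'.X₂.X n, y ≫ j.τ₂.f n = b n) ∧
      (∀ n, ∃ y : VC n ⟶ S'.X₃.X n, y ≫ j.τ₃.f n = c n) := by
  have hP2 : ∀ X Y, P X → P Y → P (X ⊞ Y) := fun X Y hX hY =>
    hext _ (ShortComplex.Splitting.ofHasBinaryBiproduct X Y).shortExact hX hY
  have := hS.mono_f
  have := hS.epi_g
  have hW : ∀ n, ∃ (W : A) (w : W ⟶ S.X₂.X n) (r : W ⟶ VC n), P W ∧ Epi r ∧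
      w ≫ S.g.f n = r ≫ c n := by
    intro n
    obtain ⟨V, v, _, hV, hr⟩ := hlift (pullback.fst (c n) (S.g.f n)) inferInstance (hVC n)
    exact ⟨V, v ≫ pullback.snd _ _, v ≫ pullback.fst _ _, hV, hr, by
      rw [Category.assoc, Category.assoc, pullback.condition]⟩
  choose W w r hW hr hwr using hW
  obtain ⟨L', l, hl, hPL, hy⟩ := exists_generated P hquot hext S.X₂
    (fun n => (VA n ⊞ VB n) ⊞ W n) (fun n => hP2 _ _ (hP2 _ _ (hVA n) (hVB n)) (hW n))
    (fun n => biprod.desc (biprod.desc (a n ≫ S.f.f n) (b n)) (w n))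
  choose y hy using hy
  obtain ⟨M', g', m, hg'e, hm, hg'⟩ : ∃ (M' : CochainComplex A ℤ) (g' : L' ⟶ M') (m : M' ⟶ S.X₃),
      Epi g' ∧ Mono m ∧ g' ≫ m = l ≫ S.g :=
    ⟨_, Abelian.factorThruImage (l ≫ S.g), Abelian.image.ι (l ≫ S.g), inferInstance,
      inferInstance, Abelian.image.fac _⟩
  let S' : ShortComplex (CochainComplex A ℤ) := ShortComplex.mk (kernel.ι g') g' (by simp)
  have hS' : S'.ShortExact :=
    { exact := ShortComplex.exact_kernel g'
      mono_f := inferInstanceAs (Mono (kernel.ι g'))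
      epi_g := hg'e }
  have := hS'.mono_f
  have := hS'.epi_g
  have hk0 : (kernel.ι g' ≫ l) ≫ S.g = 0 := by
    rw [Category.assoc, ← hg', ← Category.assoc, kernel.condition, zero_comp]
  let k : S'.X₁ ⟶ S.X₁ := hS.exact.lift (kernel.ι g' ≫ l) hk0
  have hk : k ≫ S.f = S'.f ≫ l := hS.exact.lift_f _ hk0
  let j : S' ⟶ S :=
    { τ₁ := k
      τ₂ := l
      τ₃ := m
      comm₁₂ := hk
      comm₂₃ := hg'.symm }
  have hkm : Mono k := by
    have : Mono (k ≫ S.f) := by rw [hk]; exact mono_comp _ _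
    exact mono_of_mono k S.f
  have hgn : ∀ n, g'.f n ≫ m.f n = l.f n ≫ S.g.f n := fun n => by
    rw [← HomologicalComplex.comp_f, hg', HomologicalComplex.comp_f]
  have hkn : ∀ n, k.f n ≫ S.f.f n = S'.f.f n ≫ l.f n := fun n => by
    rw [← HomologicalComplex.comp_f, hk, HomologicalComplex.comp_f]
  have hfg : ∀ n, S.f.f n ≫ S.g.f n = 0 := fun n => by
    rw [← HomologicalComplex.comp_f, S.zero, HomologicalComplex.zero_f]
  refine ⟨S', j, hS', hkm, hl, hm, fun n => hsub (S'.f.f n) inferInstance (hPL n), hPL,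
    fun n => hquot (S'.g.f n) inferInstance (hPL n), fun n => ?_, fun n => ?_, fun n => ?_⟩
  · have h1 : biprod.inl ≫ biprod.inl ≫ y n ≫ l.f n = a n ≫ S.f.f n := by
      rw [hy]; simp
    have h2 : (biprod.inl ≫ biprod.inl ≫ y n) ≫ S'.g.f n = 0 := by
      rw [← cancel_mono (m.f n)]
      change (_ ≫ g'.f n) ≫ _ = _
      rw [Category.assoc, hgn, zero_comp]
      have h3 := h1 =≫ S.g.f n
      simp only [Category.assoc, hfg, comp_zero] at h3
      simpa only [Category.assoc] using h3
    have hSn := (hS'.map_of_exact (HomologicalComplex.eval A _ n))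
    have := hSn.mono_f
    obtain ⟨z, h4⟩ : ∃ z : VA n ⟶ S'.X₁.X n, z ≫ S'.f.f n = biprod.inl ≫ biprod.inl ≫ y n :=
      ⟨hSn.exact.lift _ h2, hSn.exact.lift_f _ h2⟩
    refine ⟨z, ?_⟩
    rw [← cancel_mono (S.f.f n)]
    change (_ ≫ k.f n) ≫ _ = _
    rw [Category.assoc, hkn, reassoc_of% h4, ← h1]
  · refine ⟨biprod.inr ≫ biprod.inl ≫ y n, ?_⟩
    change _ ≫ l.f n = _
    simp [hy]
  · have h1 : biprod.inr ≫ y n ≫ l.f n = w n := by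
      rw [hy]; simp
    have h2 : c n ≫ cokernel.π (m.f n) = 0 := by
      have := hr n
      rw [← cancel_epi (r n), ← Category.assoc, ← hwr, ← h1]
      simp only [Category.assoc]
      rw [← reassoc_of% (hgn n), cokernel.condition]
      simp
    exact ⟨Abelian.monoLift (m.f n) _ h2, Abelian.monoLift_comp _ _ _⟩

/-- The map induced on iterated cones by a morphism of short complexes. -/
noncomputable def coneMap {A : Type u} [Category.{v} A] [Abelian A]
    {S' S : ShortComplex (CochainComplex A ℤ)} (j : S' ⟶ S) :
    mappingCone (mappingCone.descShortComplex S') ⟶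
      mappingCone (mappingCone.descShortComplex S) :=
  mappingCone.map _ _ (mappingCone.map S'.f S.f j.τ₁ j.τ₂ j.comm₁₂.symm) j.τ₃
    (mappingCone.map_descShortComplex S' S j).symm

lemma mono_map {A : Type u} [Category.{v} A] [Abelian A]
    {K L K' L' : CochainComplex A ℤ} (f : K ⟶ L) (f' : K' ⟶ L')
    (a : K ⟶ K') (b : L ⟶ L') (comm : f ≫ b = a ≫ f') [Mono a] [Mono b] :
    Mono (mappingCone.map f f' a b comm) := by
  have : ∀ n, Mono ((mappingCone.map f f' a b comm).f n) := fun n => by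
    refine Preadditive.mono_of_cancel_zero _ (fun {T} x hx => ?_)
    rw [mappingCone.ext_to_iff _ _ (n + 1) rfl] at hx ⊢
    simp only [mappingCone.map, mappingCone.desc_f _ _ _ _ n (n + 1) rfl] at hx
    simp at hx
    rw [← cancel_mono (a.f (n + 1)), ← cancel_mono (b.f n)]
    simpa using hx
  exact HomologicalComplex.mono_of_mono_f _ this

lemma exists_fac_cone {A : Type u} [Category.{v} A] [Abelian A]
    {S' S : ShortComplex (CochainComplex A ℤ)} (j : S' ⟶ S)
    (h₁ : Mono j.τ₁) (h₂ : Mono j.τ₂) (h₃ : Mono j.τ₃)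
    {X : CochainComplex A ℤ} (φ : X ⟶ mappingCone (mappingCone.descShortComplex S))
    (ha : ∀ p q r (hpq : p + 1 = q) (hqr : q + 1 = r), ∃ y : X.X p ⟶ S'.X₁.X r,
      y ≫ j.τ₁.f r = φ.f p ≫ (mappingCone.fst _).1.v p q hpq ≫ (mappingCone.fst _).1.v q r hqr)
    (hb : ∀ p q (hpq : p + 1 = q), ∃ y : X.X p ⟶ S'.X₂.X q,
      y ≫ j.τ₂.f q = φ.f p ≫ (mappingCone.fst _).1.v p q hpq ≫
        (mappingCone.snd _).v q q (add_zero q))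
    (hc : ∀ p, ∃ y : X.X p ⟶ S'.X₃.X p,
      y ≫ j.τ₃.f p = φ.f p ≫ (mappingCone.snd _).v p p (add_zero p)) :
    ∃ φ', φ' ≫ coneMap j = φ := by
  have : Mono (coneMap j) := by
    have := mono_map S'.f S.f j.τ₁ j.τ₂ j.comm₁₂.symm
    exact mono_map _ _ _ _ _
  have h0 : φ ≫ cokernel.π (coneMap j) = 0 := by
    ext p
    obtain ⟨y₁, hy₁⟩ := ha p (p + 1) (p + 2) rfl (by lia)
    obtain ⟨y₂, hy₂⟩ := hb p (p + 1) rfl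
    obtain ⟨y₃, hy₃⟩ := hc p
    have hp : φ.f p = ((y₁ ≫ (mappingCone.inl S'.f).v (p + 2) (p + 1) (by lia) +
        y₂ ≫ (mappingCone.inr S'.f).f (p + 1)) ≫
          (mappingCone.inl (mappingCone.descShortComplex S')).v (p + 1) p (by lia) +
        y₃ ≫ (mappingCone.inr (mappingCone.descShortComplex S')).f p) ≫ (coneMap j).f p := by
      rw [mappingCone.ext_to_iff _ _ (p + 1) rfl]
      constructor
      · rw [mappingCone.ext_to_iff _ _ (p + 2) (by lia)]
        constructor
        · simp [coneMap, mappingCone.map, hy₁]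
        · simp [coneMap, mappingCone.map, hy₂]
      · simp [coneMap, mappingCone.map, hy₃]
    rw [HomologicalComplex.comp_f, hp, Category.assoc, ← HomologicalComplex.comp_f,
      cokernel.condition]
    simp
  exact ⟨Abelian.monoLift _ _ h0, Abelian.monoLift_comp _ _ _⟩

/-- Lifting a complex along a fully faithful functor. -/
lemma exists_complex_iso {A : Type u} [Category.{v} A] [Abelian A]
    {𝒰 : Type u₁} [Category.{v₁} 𝒰] [Abelian 𝒰]
    (ι : 𝒰 ⥤ A) [ι.Full] [ι.Faithful] [ι.Additive]
    (K : CochainComplex A ℤ) (hK : ∀ n, ∃ X : 𝒰, Nonempty (ι.obj X ≅ K.X n)) :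
    ∃ K' : CochainComplex 𝒰 ℤ,
      Nonempty ((ι.mapHomologicalComplex (ComplexShape.up ℤ)).obj K' ≅ K) := by
  choose X e using hK
  let e' := fun n => (e n).some
  let K' : CochainComplex 𝒰 ℤ :=
    { X := X
      d := fun i j => ι.preimage ((e' i).hom ≫ K.d i j ≫ (e' j).inv)
      shape := fun i j hij => ι.map_injective (by
        rw [ι.map_preimage, K.shape i j hij]; simp)
      d_comp_d' := fun i j k _ _ => ι.map_injective (by simp) }
  exact ⟨K', ⟨HomologicalComplex.Hom.isoOfComponents e' (fun i j _ => by
    have h1 : ι.map (K'.d i j) = (e' i).hom ≫ K.d i j ≫ (e' j).inv := ι.map_preimage _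
    have h2 : (e' i).hom ≫ K.d i j = ((e' i).hom ≫ K.d i j ≫ (e' j).inv) ≫ (e' j).hom := by simp
    exact h2.trans (congrArg (fun t => t ≫ (e' j).hom) h1.symm))⟩⟩

lemma exists_ses_iso {A : Type u} [Category.{v} A] [Abelian A]
    {𝒰 : Type u₁} [Category.{v₁} 𝒰] [Abelian 𝒰]
    (ι : 𝒰 ⥤ A) [ι.Full] [ι.Faithful] [ι.Additive]
    [PreservesFiniteLimits ι] [PreservesFiniteColimits ι]
    (S : ShortComplex (CochainComplex A ℤ)) (hS : S.ShortExact)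
    (h₁ : ∀ n, ∃ X : 𝒰, Nonempty (ι.obj X ≅ S.X₁.X n))
    (h₂ : ∀ n, ∃ X : 𝒰, Nonempty (ι.obj X ≅ S.X₂.X n))
    (h₃ : ∀ n, ∃ X : 𝒰, Nonempty (ι.obj X ≅ S.X₃.X n)) :
    ∃ S' : ShortComplex (CochainComplex 𝒰 ℤ), S'.ShortExact ∧
      Nonempty (S'.map (ι.mapHomologicalComplex (ComplexShape.up ℤ)) ≅ S) := by
  obtain ⟨K, ⟨eK⟩⟩ := exists_complex_iso ι _ h₁
  obtain ⟨L, ⟨eL⟩⟩ := exists_complex_iso ι _ h₂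
  obtain ⟨M, ⟨eM⟩⟩ := exists_complex_iso ι _ h₃
  let ιC := ι.mapHomologicalComplex (ComplexShape.up ℤ)
  let S' : ShortComplex (CochainComplex 𝒰 ℤ) :=
    ShortComplex.mk (ιC.preimage (eK.hom ≫ S.f ≫ eL.inv)) (ιC.preimage (eL.hom ≫ S.g ≫ eM.inv))
      (ιC.map_injective (by simp))
  let e : S'.map ιC ≅ S := ShortComplex.isoMk eK eL eM
    (by
      have h1 : ιC.map S'.f = eK.hom ≫ S.f ≫ eL.inv := ιC.map_preimage _
      have h2 : eK.hom ≫ S.f = (eK.hom ≫ S.f ≫ eL.inv) ≫ eL.hom := by simp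
      exact h2.trans (congrArg (fun t => t ≫ eL.hom) h1.symm))
    (by
      have h1 : ιC.map S'.g = eL.hom ≫ S.g ≫ eM.inv := ιC.map_preimage _
      have h2 : eL.hom ≫ S.g = (eL.hom ≫ S.g ≫ eM.inv) ≫ eM.hom := by simp
      exact h2.trans (congrArg (fun t => t ≫ eM.hom) h1.symm))
  refine ⟨S', ?_, ⟨e⟩⟩
  have hS1 : (S'.map ιC).ShortExact := ShortComplex.shortExact_of_iso e.symm hS
  apply HomologicalComplex.shortExact_of_degreewise_shortExact
  intro n
  have hSn : ((S'.map (HomologicalComplex.eval _ _ n)).map ι).ShortExact :=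
    hS1.map_of_exact (HomologicalComplex.eval _ _ n)
  have m1 : Mono (ι.map (S'.f.f n)) := hSn.mono_f
  have m2 : Epi (ι.map (S'.g.f n)) := hSn.epi_g
  exact
    { exact := (ShortComplex.exact_map_iff_of_faithful _ ι).1 hSn.exact
      mono_f := ι.mono_of_mono_map m1
      epi_g := ι.epi_of_epi_map m2 }

lemma nonempty_cone_iso {A : Type u} [Category.{v} A] [Abelian A]
    {K L K' L' : CochainComplex A ℤ} (φ : K ⟶ L) (φ' : K' ⟶ L') (a : K ≅ K') (b : L ≅ L')
    (comm : φ ≫ b.hom = a.hom ≫ φ') : Nonempty (mappingCone φ ≅ mappingCone φ') := by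
  have comm' : φ' ≫ b.inv = a.inv ≫ φ := by
    rw [Iso.comp_inv_eq, Category.assoc, comm, Iso.inv_hom_id_assoc]
  refine ⟨⟨mappingCone.map φ φ' a.hom b.hom comm, mappingCone.map φ' φ a.inv b.inv comm', ?_, ?_⟩⟩
  · rw [← mappingCone.map_comp]
    simp only [Iso.hom_inv_id]
    exact mappingCone.map_id _
  · rw [← mappingCone.map_comp]
    simp only [Iso.inv_hom_id]
    exact mappingCone.map_id _

/-- Iterated cones commute with additive functors. -/
lemma exists_cone_iso {A : Type u} [Category.{v} A] [Abelian A]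
    {𝒰 : Type u₁} [Category.{v₁} 𝒰] [Abelian 𝒰] (ι : 𝒰 ⥤ A) [ι.Additive]
    (S : ShortComplex (CochainComplex 𝒰 ℤ)) :
    Nonempty ((ι.mapHomologicalComplex (ComplexShape.up ℤ)).obj
        (mappingCone (mappingCone.descShortComplex S)) ≅
      mappingCone (mappingCone.descShortComplex
        (S.map (ι.mapHomologicalComplex (ComplexShape.up ℤ))))) := by
  obtain ⟨e⟩ := nonempty_cone_iso ((ι.mapHomologicalComplex (ComplexShape.up ℤ)).map
    (mappingCone.descShortComplex S)) (mappingCone.descShortComplex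
        (S.map (ι.mapHomologicalComplex (ComplexShape.up ℤ))))
    (mappingCone.mapHomologicalComplexIso S.f ι) (Iso.refl _)
    ((Category.comp_id _).trans
      (mappingCone.mapHomologicalComplexIso_hom_descShortComplex ι S).symm)
  exact ⟨mappingCone.mapHomologicalComplexIso (mappingCone.descShortComplex S) ι ≪≫ e⟩

lemma coneMap_comp {A : Type u} [Category.{v} A] [Abelian A]
    {S₁ S₂ S₃ : ShortComplex (CochainComplex A ℤ)} (f : S₁ ⟶ S₂) (g : S₂ ⟶ S₃) :
    coneMap (f ≫ g) = coneMap f ≫ coneMap g := by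
  simp only [coneMap, ← mappingCone.map_comp, ShortComplex.comp_τ₁, ShortComplex.comp_τ₂,
    ShortComplex.comp_τ₃]

lemma coneMap_id {A : Type u} [Category.{v} A] [Abelian A]
    (S : ShortComplex (CochainComplex A ℤ)) : coneMap (𝟙 S) = 𝟙 _ := by
  simp only [coneMap, mappingCone.map_id, ShortComplex.id_τ₁, ShortComplex.id_τ₂,
    ShortComplex.id_τ₃]

lemma totClosed_isAbsolutelyAcyclic {A : Type u} [Category.{v} A] [Abelian A] :
    TotClosed (IsAbsolutelyAcyclic (A := A)) where
  tot f g hfg h P hP := hP.tot f g hfg h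
  zero X hX P hP := hP.zero X hX
  iso e hX P hP := hP.iso e (hX P hP)
  shift X n hX P hP := hP.shift X n (hX P hP)
  ext₂ T hT h₁ h₃ P hP := hP.ext₂ T hT (h₁ P hP) (h₃ P hP)
  smd X Y h P hP := hP.smd X Y (h P hP)

/-- The absolutely acyclic complexes as an object property. -/
abbrev absAc (A : Type u) [Category.{v} A] [Abelian A] :
    ObjectProperty (HomotopyCategory A (ComplexShape.up ℤ)) := IsAbsolutelyAcyclic

lemma absAc_isTriangulated (A : Type u) [Category.{v} A] [Abelian A] :
    (absAc A).IsTriangulated := by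
  have h := totClosed_isAbsolutelyAcyclic (A := A)
  have h1 : (absAc A).IsClosedUnderIsomorphisms := ⟨fun e hX => h.iso e hX⟩
  have h2 : (absAc A).ContainsZero := by
    obtain ⟨Z, hZ⟩ := HasZeroObject.zero (C := HomotopyCategory A (ComplexShape.up ℤ))
    exact ⟨⟨Z, hZ, h.zero _ hZ⟩⟩
  have h3 : (absAc A).IsStableUnderShift ℤ := ⟨fun n => ⟨fun X hX => h.shift X n hX⟩⟩
  have h4 : (absAc A).IsTriangulatedClosed₂ := .mk' (fun T hT h₁ h₃ => h.ext₂ T hT h₁ h₃)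
  exact {}

lemma absW_eq_trW (A : Type u) [Category.{v} A] [Abelian A] : absW A = (absAc A).trW := by
  ext X Y f
  constructor
  · rintro ⟨Z, g, h, hT, hZ⟩
    exact ⟨Z, g, h, hT, hZ⟩
  · rintro ⟨Z, g, h, hT, hZ⟩
    exact ⟨Z, g, h, hT, hZ⟩

lemma absAc_cone {A : Type u} [Category.{v} A] [Abelian A]
    (S : ShortComplex (CochainComplex A ℤ)) (hS : S.ShortExact) :
    absAc A ((HomotopyCategory.quotient A (ComplexShape.up ℤ)).obj
      (mappingCone (mappingCone.descShortComplex S))) := by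
  have h := totClosed_isAbsolutelyAcyclic (A := A)
  have h1 := h.shift _ 1 (h.iso (((HomotopyCategory.quotient A
    (ComplexShape.up ℤ)).commShiftIso (-1 : ℤ)).app
      (mappingCone (mappingCone.descShortComplex S))) (h.tot S.f S.g S.zero hS))
  exact h.iso ((shiftFunctorCompIsoId _ (-1 : ℤ) 1 (by lia)).app _) h1

lemma exists_fac {A : Type u} [Category.{v} A] [Abelian A] (P : A → Prop)
    (hsub : ∀ {X Y : A} (f : X ⟶ Y), Mono f → P Y → P X)
    (hquot : ∀ {X Y : A} (f : X ⟶ Y), Epi f → P X → P Y)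
    (hext : ∀ (S : ShortComplex A), S.ShortExact → P S.X₁ → P S.X₃ → P S.X₂)
    (hlift : ∀ {B U : A} (p : B ⟶ U), Epi p → P U →
      ∃ (V : A) (v : V ⟶ B), Mono v ∧ P V ∧ Epi (v ≫ p))
    {𝒰 : Type u₁} [Category.{v₁} 𝒰] [Abelian 𝒰]
    (ι : 𝒰 ⥤ A) [ι.Full] [ι.Faithful] [ι.Additive]
    [PreservesFiniteLimits ι] [PreservesFiniteColimits ι]
    (himb : ∀ M : A, P M → ∃ X : 𝒰, Nonempty (ι.obj X ≅ M))
    (S : ShortComplex (CochainComplex A ℤ)) (hS : S.ShortExact)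
    (X : CochainComplex A ℤ) (hX : ∀ n, P (X.X n))
    (φ : X ⟶ mappingCone (mappingCone.descShortComplex S)) :
    ∃ (S'' : ShortComplex (CochainComplex 𝒰 ℤ)) (_ : S''.ShortExact)
      (a : X ⟶ (ι.mapHomologicalComplex (ComplexShape.up ℤ)).obj
        (mappingCone (mappingCone.descShortComplex S'')))
      (b : (ι.mapHomologicalComplex (ComplexShape.up ℤ)).obj
        (mappingCone (mappingCone.descShortComplex S'')) ⟶
          mappingCone (mappingCone.descShortComplex S)), a ≫ b = φ := by
  obtain ⟨S', j, hS', m₁, m₂, m₃, p₁, p₂, p₃, l₁, l₂, l₃⟩ :=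
    exists_subSES P hsub hquot hext hlift S hS (fun n => X.X (n - 2)) (fun n => X.X (n - 1))
      (fun n => X.X n) (fun n => hX _) (fun n => hX _) (fun n => hX _)
      (fun n => φ.f (n - 2) ≫ (mappingCone.fst _).1.v (n - 2) (n - 1) (by lia) ≫
        (mappingCone.fst _).1.v (n - 1) n (by lia))
      (fun n => φ.f (n - 1) ≫ (mappingCone.fst _).1.v (n - 1) n (by lia) ≫
        (mappingCone.snd _).v n n (add_zero n))
      (fun n => φ.f n ≫ (mappingCone.snd _).v n n (add_zero n))
  obtain ⟨S'', hS'', ⟨e⟩⟩ := exists_ses_iso ι S' hS' (fun n => himb _ (p₁ n))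
    (fun n => himb _ (p₂ n)) (fun n => himb _ (p₃ n))
  obtain ⟨φ', hφ'⟩ := exists_fac_cone j m₁ m₂ m₃ φ
    (by
      intro p q r hpq hqr
      obtain rfl : p = r - 2 := by lia
      obtain rfl : q = r - 1 := by lia
      exact l₁ r)
    (by
      intro p q hpq
      obtain rfl : p = q - 1 := by lia
      exact l₂ q)
    l₃
  obtain ⟨c⟩ := exists_cone_iso ι S''
  have he : coneMap e.inv ≫ coneMap e.hom = 𝟙 _ := by
    rw [← coneMap_comp, e.inv_hom_id, coneMap_id]
  refine ⟨S'', hS'', φ' ≫ coneMap e.inv ≫ c.inv, c.hom ≫ coneMap e.hom ≫ coneMap j, ?_⟩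
  rw [Category.assoc, Category.assoc, Iso.inv_hom_id_assoc, reassoc_of% he, hφ']

end Concrete

lemma totClosed_facCond (P : A → Prop)
    (hsub : ∀ {X Y : A} (f : X ⟶ Y), Mono f → P Y → P X)
    (hquot : ∀ {X Y : A} (f : X ⟶ Y), Epi f → P X → P Y)
    (hext : ∀ (S : ShortComplex A), S.ShortExact → P S.X₁ → P S.X₃ → P S.X₂)
    (hlift : ∀ {B U : A} (p : B ⟶ U), Epi p → P U →
      ∃ (V : A) (v : V ⟶ B), Mono v ∧ P V ∧ Epi (v ≫ p))
    {𝒰 : Type u₁} [Category.{v₁} 𝒰] [Abelian 𝒰]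
    (ι : 𝒰 ⥤ A) [ι.Full] [ι.Faithful] [ι.Additive]
    [PreservesFiniteLimits ι] [PreservesFiniteColimits ι]
    (hima : ∀ X : 𝒰, P (ι.obj X))
    (himb : ∀ M : A, P M → ∃ X : 𝒰, Nonempty (ι.obj X ≅ M)) :
    TotClosed (FacCond (ι.mapHomotopyCategory (ComplexShape.up ℤ)) (absAc 𝒰)) := by
  have := absAc_isTriangulated 𝒰
  have hiso : ∀ {X Y : HomotopyCategory A (ComplexShape.up ℤ)}, (X ≅ Y) →
      FacCond (ι.mapHomotopyCategory (ComplexShape.up ℤ)) (absAc 𝒰) X →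
      FacCond (ι.mapHomotopyCategory (ComplexShape.up ℤ)) (absAc 𝒰) Y :=
    fun e h => facCond_retract _ _ e.inv e.hom e.inv_hom_id h
  refine
    { tot := ?_
      zero := fun X hX => facCond_zero _ _ X hX
      iso := hiso
      shift := fun X n hX => facCond_shift _ _ X n hX
      ext₂ := fun T hT h₁ h₃ => facCond_ext _ _ T hT h₁ h₃
      smd := fun X Y h => facCond_retract _ _ biprod.inl biprod.fst biprod.inl_fst h }
  intro K L M f g hfg hS
  refine hiso (((HomotopyCategory.quotient A (ComplexShape.up ℤ)).commShiftIso (-1 : ℤ)).app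
    (CochainComplex.mappingCone (CochainComplex.mappingCone.descShortComplex
      (ShortComplex.mk f g hfg)))).symm (facCond_shift _ _ _ _ (facCond_of_fac _ _ _ ?_))
  intro X ψ
  obtain ⟨X, rfl⟩ := (HomotopyCategory.quotient_obj_surjective X)
  let ιC := ι.mapHomologicalComplex (ComplexShape.up ℤ)
  obtain ⟨φ, hφ⟩ : ∃ φ : ιC.obj X ⟶ _, (HomotopyCategory.quotient A (ComplexShape.up ℤ)).map φ = ψ :=
    (HomotopyCategory.quotient A (ComplexShape.up ℤ)).map_surjective ψ
  obtain ⟨S'', hS'', a, b, hab⟩ := exists_fac P hsub hquot hext hlift ι himb _ hS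
    (ιC.obj X) (fun n => hima _) φ
  obtain ⟨a, rfl⟩ := ιC.map_surjective a
  refine ⟨(HomotopyCategory.quotient 𝒰 (ComplexShape.up ℤ)).obj _,
    (HomotopyCategory.quotient 𝒰 (ComplexShape.up ℤ)).map a,
    (HomotopyCategory.quotient A (ComplexShape.up ℤ)).map b, absAc_cone S'' hS'', ?_⟩
  rw [← hφ, ← hab, Functor.map_comp]
  rfl

/-- Let `A` be abelian and `U ⊆ A` a non-empty full subcategory closed
under subobjects, quotients and extensions, such that every epimorphism `B ↠ U` with
`U ∈ U` admits a subobject `V ⊆ B` with `V ∈ U` mapping epimorphically onto `U`.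
Then the induced functor `D^abs(U) ⥤ D^abs(A)` between absolute derived categories is
fully faithful.  Here `U` is formalized as an abelian category `𝒰` with a fully
faithful exact functor `ι` to `A` with essential image the objects satisfying `P`, and
the absolute derived categories as localizations of the homotopy categories at the
morphisms with absolutely acyclic cone. -/
theorem stmt_12 (P : A → Prop)
    (hne : ∃ X, P X)
    (hsub : ∀ {X Y : A} (f : X ⟶ Y), Mono f → P Y → P X)
    (hquot : ∀ {X Y : A} (f : X ⟶ Y), Epi f → P X → P Y)
    (hext : ∀ (S : ShortComplex A), S.ShortExact → P S.X₁ → P S.X₃ → P S.X₂)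
    (hlift : ∀ {B U : A} (p : B ⟶ U), Epi p → P U →
      ∃ (V : A) (v : V ⟶ B), Mono v ∧ P V ∧ Epi (v ≫ p))
    {𝒰 : Type u₁} [Category.{v₁} 𝒰] [Abelian 𝒰]
    (ι : 𝒰 ⥤ A) [ι.Full] [ι.Faithful] [ι.Additive]
    [PreservesFiniteLimits ι] [PreservesFiniteColimits ι]
    (hima : ∀ X : 𝒰, P (ι.obj X))
    (himb : ∀ M : A, P M → ∃ X : 𝒰, Nonempty (ι.obj X ≅ M))
    {D𝒰 : Type u₂} [Category.{v₂} D𝒰] (L𝒰 : HomotopyCategory 𝒰 (ComplexShape.up ℤ) ⥤ D𝒰)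
    [L𝒰.IsLocalization (absW 𝒰)]
    {DA : Type u₃} [Category.{v₃} DA] (LA : HomotopyCategory A (ComplexShape.up ℤ) ⥤ DA)
    [LA.IsLocalization (absW A)]
    (F : D𝒰 ⥤ DA)
    (hF : (ι.mapHomotopyCategory (ComplexShape.up ℤ) ⋙ LA) ≅ (L𝒰 ⋙ F)) :
    F.Full ∧ F.Faithful := by

  have h1 := absAc_isTriangulated 𝒰
  have h2 := absAc_isTriangulated A
  have : L𝒰.IsLocalization (absAc 𝒰).trW := absW_eq_trW 𝒰 ▸ inferInstance
  have : LA.IsLocalization (absAc A).trW := absW_eq_trW A ▸ inferInstance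
  exact fullyFaithful_of_facCond (ι.mapHomotopyCategory (ComplexShape.up ℤ)) (absAc 𝒰) (absAc A)
    (fun Z hZ => hZ _ (totClosed_facCond P hsub hquot hext hlift ι hima himb)) L𝒰 LA F hF
end

section
/- Let X be a regular noetherian scheme of Krull dimension d. Then the abelian category Qcoh(X) of quasi-coherent sheaves on X has global dimension equal to d. -/
open CategoryTheory CategoryTheory.Limits CategoryTheory.Abelian AlgebraicGeometry

/-- A (noetherian) local ring is regular if its maximal ideal can be generated by
(Krull-dimension many) elements. -/
def IsRegularLocal (O : Type u) [CommRing O] [IsLocalRing O] : Prop :=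
  ∃ s : Finset O, Ideal.span (s : Set O) = IsLocalRing.maximalIdeal O ∧
    (s.card : WithBot ℕ∞) = ringKrullDim O

namespace RegQ
section A1

/-- The `a`-power torsion submodule. -/
def aTor {A : Type*} [CommRing A] (a : A) (M : Type*) [AddCommGroup M] [Module A M] :
    Submodule A M where
  carrier := {x | ∃ n : ℕ, a ^ n • x = 0}
  add_mem' := by
    rintro x y ⟨n, hn⟩ ⟨m, hm⟩
    refine ⟨n + m, ?_⟩
    rw [smul_add, pow_add, mul_smul, mul_smul, hm, smul_zero, add_zero, smul_comm, hn, smul_zero]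
  zero_mem' := ⟨0, by simp⟩
  smul_mem' := by
    rintro c x ⟨n, hn⟩
    exact ⟨n, by rw [smul_comm, hn, smul_zero]⟩

theorem mem_aTor {A : Type*} [CommRing A] {a : A} {M : Type*} [AddCommGroup M] [Module A M]
    {x : M} : x ∈ aTor a M ↔ ∃ n : ℕ, a ^ n • x = 0 := Iff.rfl

theorem aTor_baer {A : Type*} [CommRing A] [IsNoetherianRing A] (a : A)
    {M : Type*} [AddCommGroup M] [Module A M] (h : Module.Baer A M) :
    Module.Baer A (aTor a M) := by
  intro J g
  -- `g` is killed by a power of `a`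
  have hJ : J.FG := IsNoetherian.noetherian J
  have hkill : ∃ n : ℕ, ∀ j : J, a ^ n • g j = 0 := by
    have hfg : (⊤ : Submodule A J).FG := IsNoetherian.noetherian _
    obtain ⟨s, hs⟩ := hfg
    have : ∀ j : J, ∃ n : ℕ, a ^ n • g j = 0 := by
      intro j
      obtain ⟨n, hn⟩ := (g j).2
      exact ⟨n, Subtype.ext hn⟩
    choose N hN using this
    refine ⟨s.sup N, fun j => ?_⟩
    have hj : j ∈ Submodule.span A (s : Set J) := by rw [hs]; trivial
    induction hj using Submodule.span_induction with
    | mem x hx =>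
      have hle : N x ≤ s.sup N := Finset.le_sup (f := N) hx
      obtain ⟨k, hk⟩ := Nat.exists_eq_add_of_le hle
      rw [hk, add_comm, pow_add, mul_smul, hN, smul_zero]
    | zero => simp
    | add x y _ _ hx hy => rw [map_add, smul_add, hx, hy, add_zero]
    | smul c x _ hx => rw [map_smul, smul_comm, hx, smul_zero]
  obtain ⟨n, hn⟩ := hkill
  -- Artin-Rees
  obtain ⟨k, hk⟩ := Ideal.exists_pow_inf_eq_pow_smul (Ideal.span {a}) (J : Submodule A A)
  have hAR : ∀ x ∈ J, (∃ y, x = a ^ (n + k) * y) → ∃ z ∈ J, x = a ^ n * z := by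
    rintro x hx ⟨y, rfl⟩
    have h1 : a ^ (n + k) * y ∈ (Ideal.span {a} ^ (n + k) • (⊤ : Submodule A A)) ⊓ J := by
      refine ⟨?_, hx⟩
      rw [Ideal.span_singleton_pow]
      have : a ^ (n + k) * y = a ^ (n + k) • y := rfl
      rw [this]
      exact Submodule.smul_mem_smul (Ideal.mem_span_singleton_self _) trivial
    rw [hk (n + k) (by omega), Nat.add_sub_cancel, Ideal.span_singleton_pow] at h1
    rw [Submodule.ideal_span_singleton_smul] at h1
    obtain ⟨z, hz, hz'⟩ := h1
    exact ⟨z, hz.2, hz'.symm⟩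
  -- the quotient map
  let K : Ideal A := Ideal.span {a ^ (n + k)}
  let q : A →ₗ[A] A ⧸ K := K.mkQ
  let J' : Submodule A (A ⧸ K) := Submodule.map q J
  let g' : J →ₗ[A] M := (aTor a M).subtype ∘ₗ g
  let qJ : J →ₗ[A] J' := (q.submoduleMap J)
  have hsurj : Function.Surjective qJ := q.submoduleMap_surjective J
  have hker : LinearMap.ker qJ ≤ LinearMap.ker g' := by
    rintro ⟨x, hx⟩ h1
    have h2 : q x = 0 := congrArg Subtype.val h1
    have h3 : x ∈ K := (Submodule.Quotient.mk_eq_zero K).1 h2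
    obtain ⟨y, hy⟩ := Ideal.mem_span_singleton'.1 h3
    obtain ⟨z, hz, hz'⟩ := hAR x hx ⟨y, by rw [← hy, mul_comm]⟩
    have : (⟨x, hx⟩ : J) = a ^ n • ⟨z, hz⟩ := Subtype.ext hz'
    rw [LinearMap.mem_ker, this, map_smul]
    exact congrArg Subtype.val (hn ⟨z, hz⟩)
  let φ : J' →ₗ[A] M := (LinearMap.ker qJ).liftQ g' hker ∘ₗ (qJ.quotKerEquivOfSurjective hsurj).symm.toLinearMap
  have hφ : ∀ j, φ (qJ j) = g' j := by
    intro j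
    have : (qJ.quotKerEquivOfSurjective hsurj).symm (qJ j) = (LinearMap.ker qJ).mkQ j := by
      rw [LinearEquiv.symm_apply_eq]; rfl
    change (LinearMap.ker qJ).liftQ g' hker ((qJ.quotKerEquivOfSurjective hsurj).symm (qJ j)) = _
    rw [this]; simp
  obtain ⟨ψ, hψ⟩ := h.extension_property J'.subtype J'.injective_subtype φ
  refine ⟨(ψ ∘ₗ q).codRestrict (aTor a M) ?_, ?_⟩
  · intro x
    refine ⟨n + k, ?_⟩
    have : a ^ (n + k) • q x = 0 := by
      rw [← map_smul]
      exact (Submodule.Quotient.mk_eq_zero K).2 (Ideal.mul_mem_right _ _ (Ideal.mem_span_singleton_self _))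
    rw [LinearMap.comp_apply, ← map_smul, this, map_zero]
  · intro x hx
    apply Subtype.ext
    have := LinearMap.congr_fun hψ (qJ ⟨x, hx⟩)
    rw [hφ] at this
    exact this

theorem baer_of_retract {A : Type*} [CommRing A] {M N : Type*} [AddCommGroup M] [Module A M]
    [AddCommGroup N] [Module A N] (i : N →ₗ[A] M) (r : M →ₗ[A] N) (hir : ∀ x, r (i x) = x)
    (h : Module.Baer A M) : Module.Baer A N := by
  intro J g
  obtain ⟨g', hg'⟩ := h J (i ∘ₗ g)
  refine ⟨r ∘ₗ g', fun x hx => ?_⟩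
  rw [LinearMap.comp_apply, hg', LinearMap.comp_apply, hir]

theorem exists_split {A : Type*} [CommRing A] [IsNoetherianRing A] (a : A)
    {M : Type*} [AddCommGroup M] [Module A M] (h : Module.Baer A M) :
    ∃ K : Submodule A M, IsCompl (aTor a M) K ∧ Module.Baer A K ∧
      Function.Bijective (fun x : K => a • x) := by
  obtain ⟨r, hr⟩ := (aTor_baer a h).extension_property (aTor a M).subtype
    (aTor a M).injective_subtype LinearMap.id
  have hr' : ∀ x : aTor a M, r x = x := fun x => LinearMap.congr_fun hr x
  have hc : IsCompl (aTor a M) (LinearMap.ker r) := LinearMap.isCompl_of_proj hr'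
  have hB : Module.Baer A (LinearMap.ker r) := by
    refine baer_of_retract (LinearMap.ker r).subtype
      ((LinearMap.id - (aTor a M).subtype ∘ₗ r).codRestrict (LinearMap.ker r) ?_) ?_ h
    rotate_left
    · intro x
      rw [LinearMap.mem_ker]
      simp [hr']
    · rintro ⟨x, hx⟩
      apply Subtype.ext
      have : r x = 0 := hx
      simp [this]
  refine ⟨LinearMap.ker r, hc, hB, ?_⟩
  have htf : ∀ (n : ℕ) (x : LinearMap.ker r), a ^ n • x = 0 → x = 0 := by
    intro n x hx
    have h1 : (x : M) ∈ aTor a M := ⟨n, congrArg Subtype.val hx⟩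
    exact Subtype.ext (Submodule.disjoint_def.1 hc.disjoint _ h1 x.2)
  constructor
  · intro x y hxy
    have : a ^ 1 • (x - y) = 0 := by
      rw [pow_one, smul_sub]; exact sub_eq_zero.2 hxy
    exact sub_eq_zero.1 (htf 1 _ this)
  · intro x
    -- extend `(a) → K, a * c ↦ c • x`
    let f : A →ₗ[A] LinearMap.ker r := LinearMap.toSpanSingleton A _ x
    let m : A →ₗ[A] A := LinearMap.toSpanSingleton A A a
    have hker : LinearMap.ker m ≤ LinearMap.ker f := by
      intro c hc'
      have h1 : c * a = 0 := hc'
      change c • x = 0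
      apply htf 1
      rw [pow_one, smul_smul, mul_comm, h1, zero_smul]
    let φ : LinearMap.range m →ₗ[A] LinearMap.ker r :=
      (LinearMap.ker m).liftQ f hker ∘ₗ m.quotKerEquivRange.symm.toLinearMap
    obtain ⟨ψ, hψ⟩ := hB.extension_property (LinearMap.range m).subtype
      (LinearMap.range m).injective_subtype φ
    refine ⟨ψ 1, ?_⟩
    have h1 : ψ (m 1) = φ ⟨m 1, 1, rfl⟩ := LinearMap.congr_fun hψ ⟨m 1, 1, rfl⟩
    have h2 : m.quotKerEquivRange.symm ⟨m 1, 1, rfl⟩ = (LinearMap.ker m).mkQ 1 := by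
      rw [LinearEquiv.symm_apply_eq]; rfl
    have h3 : φ ⟨m 1, 1, rfl⟩ = f 1 := by
      change (LinearMap.ker m).liftQ f hker (m.quotKerEquivRange.symm ⟨m 1, 1, rfl⟩) = _
      rw [h2]; exact Submodule.liftQ_apply _ _ _
    change a • ψ 1 = x
    rw [← map_smul]
    have h4 : m 1 = a • (1 : A) := by simp [m]
    rw [← h4, h1, h3]
    simp [f]

/-- Decomposition principle for injective modules over a noetherian ring. -/
theorem decomp {A : Type u} [CommRing A] [IsNoetherianRing A]
    (P : ModuleCat.{u} A → Prop)
    (hiso : ∀ M N : ModuleCat.{u} A, (M ≃ₗ[A] N) → P M → P N)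
    (hprod : ∀ M N : ModuleCat.{u} A, P M → P N → P (ModuleCat.of A (M × N)))
    (l : List A)
    (h0 : ∀ J : ModuleCat.{u} A, Module.Injective A J →
      (∀ a ∈ l, ∀ x : J, ∃ n : ℕ, a ^ n • x = 0) → P J)
    (h1 : ∀ J : ModuleCat.{u} A, Module.Injective A J → ∀ a ∈ l,
      Function.Bijective (fun x : J => a • x) → P J) :
    ∀ I : ModuleCat.{u} A, Module.Injective A I → P I := by
  induction l with
  | nil => exact fun I hI => h0 I hI (fun a ha => absurd ha List.not_mem_nil)
  | cons a l ih =>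
    apply ih
    · intro J hJ hl
      obtain ⟨K, hc, hB, hbij⟩ := exists_split a (Module.Baer.of_injective hJ)
      refine hiso (ModuleCat.of A ((ModuleCat.of A (aTor a J)) × (ModuleCat.of A K))) J
        (Submodule.prodEquivOfIsCompl _ _ hc) (hprod _ _ ?_ ?_)
      · refine h0 _ (aTor_baer a (Module.Baer.of_injective hJ)).injective ?_
        intro b hb x
        rcases List.mem_cons.1 hb with rfl | hb
        · obtain ⟨n, hn⟩ := x.2
          exact ⟨n, Subtype.ext hn⟩
        · obtain ⟨n, hn⟩ := hl b hb x.1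
          exact ⟨n, Subtype.ext hn⟩
      · exact h1 _ hB.injective a (by simp) hbij
    · intro J hJ b hb
      exact h1 J hJ b (List.mem_cons_of_mem _ hb)

end A1
end RegQ

namespace RegQ
section A2
open IsLocalRing RingTheory.Sequence

theorem quot_gens {R : Type u} [CommRing R] [IsLocalRing R] [IsNoetherianRing R] (n : ℕ)
    (hn : (maximalIdeal R).spanFinrank = n + 1) (x : R) (hx : x ∈ maximalIdeal R)
    (hx2 : x ∉ (maximalIdeal R) ^ 2) [IsLocalRing (R ⧸ Ideal.span {x})] :
    (maximalIdeal (R ⧸ Ideal.span {x})).spanFinrank ≤ n := by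
  classical
  rw [spanFinrank_maximalIdeal_eq_finrank_cotangentSpace] at hn
  let v : CotangentSpace R := (maximalIdeal R).toCotangent ⟨x, hx⟩
  have hv : v ≠ 0 := fun h => hx2 (((maximalIdeal R).toCotangent_eq_zero ⟨x, hx⟩).1 h)
  have hli : LinearIndepOn (ResidueField R) id ({v} : Set (CotangentSpace R)) :=
    LinearIndepOn.singleton hv
  let B : Set (CotangentSpace R) := hli.extend (Set.subset_univ _)
  have hvB : v ∈ B := hli.subset_extend (Set.subset_univ _) rfl
  let b : Module.Basis B (ResidueField R) (CotangentSpace R) := Module.Basis.extend hli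
  have : Finite B := Module.Finite.finite_basis b
  have hcard : B.ncard = n + 1 := by
    rw [← hn, Module.finrank_eq_nat_card_basis b]
    rfl
  have hspan : Submodule.span (ResidueField R) B = ⊤ := by
    have := b.span_eq
    rwa [Module.Basis.range_extend] at this
  let σ : CotangentSpace R → maximalIdeal R := fun w =>
    if w = v then ⟨x, hx⟩ else ((maximalIdeal R).toCotangent_surjective w).choose
  have hσ : ∀ w, (maximalIdeal R).toCotangent (σ w) = w := by
    intro w
    by_cases h : w = v
    · simp only [σ, h, if_true]; rfl
    · simp only [σ, h, if_false]
      exact ((maximalIdeal R).toCotangent_surjective w).choose_spec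
  have hs : Submodule.span R (σ '' B) = ⊤ := by
    rw [← CotangentSpace.span_image_eq_top_iff, Set.image_image]
    simp only [hσ, Set.image_id']
    exact hspan
  have hm : Ideal.span ((fun w => (σ w : R)) '' B) = maximalIdeal R := by
    have := congrArg (Submodule.map (maximalIdeal R).subtype) hs
    rw [Submodule.map_span, Submodule.map_top, Submodule.range_subtype, Set.image_image] at this
    exact this
  have hm' : maximalIdeal (R ⧸ Ideal.span {x}) =
      Ideal.span ((fun w => Ideal.Quotient.mk (Ideal.span {x}) (σ w : R)) '' (B \ {v})) := by
    rw [← IsLocalRing.map_maximalIdeal_of_surjective (Ideal.Quotient.mk (Ideal.span {x}))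
      Ideal.Quotient.mk_surjective]
    conv_lhs => rw [← hm, Ideal.map_span, Set.image_image]
    apply le_antisymm
    · rw [Ideal.span_le]
      rintro _ ⟨w, hw, rfl⟩
      by_cases h : w = v
      · have : Ideal.Quotient.mk (Ideal.span {x}) (σ w : R) = 0 := by
          simp only [σ, h, if_true]
          exact Ideal.Quotient.eq_zero_iff_mem.2 (Ideal.mem_span_singleton_self x)
        simp only [this]
        exact Submodule.zero_mem _
      · exact Ideal.subset_span ⟨w, ⟨hw, h⟩, rfl⟩
    · exact Ideal.span_mono (Set.image_mono Set.sdiff_subset)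
  rw [hm']
  have hfin : (B \ {v}).Finite := (Set.toFinite B).subset Set.sdiff_subset
  refine (Submodule.spanFinrank_span_le_ncard_of_finite (hfin.image _)).trans
    ((Set.ncard_image_le hfin).trans ?_)
  rw [Set.ncard_sdiff_singleton_of_mem hvB, hcard]
  omega

theorem regular_main (n : ℕ) : ∀ (R : Type u) [CommRing R] [IsRegularLocalRing R],
    ringKrullDim R = n → IsDomain R ∧ ∃ rs : List R, IsWeaklyRegular R rs ∧ rs.length = n ∧
      Ideal.ofList rs = maximalIdeal R := by
  induction n with
  | zero =>
    intro R _ _ hd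
    have h1 := IsRegularLocalRing.spanFinrank_maximalIdeal (R := R)
    rw [hd] at h1
    have h2 : (maximalIdeal R).spanFinrank = 0 := by exact_mod_cast h1
    rw [Submodule.spanFinrank_eq_zero_iff_eq_bot (maximalIdeal R).fg_of_isNoetherianRing] at h2
    refine ⟨?_, [], IsWeaklyRegular.nil _ _, rfl, by rw [Ideal.ofList_nil, h2]⟩
    have : IsField R := IsLocalRing.isField_iff_maximalIdeal_eq.2 h2
    exact this.isDomain
  | succ n ih =>
    intro R _ _ hd
    have h1 := IsRegularLocalRing.spanFinrank_maximalIdeal (R := R)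
    rw [hd] at h1
    have h2 : (maximalIdeal R).spanFinrank = n + 1 := by exact_mod_cast h1
    have hht : (maximalIdeal R).height = ((n + 1 : ℕ) : ℕ∞) := by
      have := maximalIdeal_height_eq_ringKrullDim (R := R)
      rw [hd] at this
      exact_mod_cast this
    -- choose x
    have hex : ∃ x ∈ maximalIdeal R, x ∉ (maximalIdeal R) ^ 2 ∧
        ∀ p ∈ minimalPrimes R, x ∉ p := by
      by_contra! hcon
      have hfin := minimalPrimes.finite_of_isNoetherianRing R
      have hsub : ((maximalIdeal R : Ideal R) : Set R) ⊆
          ⋃ i ∈ ((insert ((maximalIdeal R) ^ 2) hfin.toFinset : Finset (Ideal R)) : Set (Ideal R)),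
            (id i : Ideal R) := by
        intro y hy
        rw [Set.mem_iUnion₂]
        by_cases hy2 : y ∈ (maximalIdeal R) ^ 2
        · exact ⟨_, Finset.mem_insert_self _ _, hy2⟩
        · obtain ⟨p, hp, hyp⟩ := hcon y hy hy2
          exact ⟨p, Finset.mem_insert_of_mem (hfin.mem_toFinset.2 hp), hyp⟩
      rw [Ideal.subset_union_prime ((maximalIdeal R) ^ 2) ((maximalIdeal R) ^ 2)] at hsub
      · obtain ⟨p, hp, hle⟩ := hsub
        rcases Finset.mem_insert.1 hp with rfl | hp
        · have : maximalIdeal R = ⊥ := by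
            apply Submodule.eq_bot_of_le_smul_of_le_jacobson_bot (maximalIdeal R) _
              (maximalIdeal R).fg_of_isNoetherianRing
            · rw [smul_eq_mul, ← pow_two]; exact hle
            · exact IsLocalRing.maximalIdeal_le_jacobson _
          rw [this, Submodule.spanFinrank_bot] at h2
          omega
        · have hp' := hfin.mem_toFinset.1 hp
          have := Ideal.IsMinimalPrime.isPrime hp'
          have h3 : p = maximalIdeal R := le_antisymm (le_maximalIdeal (this.ne_top)) hle
          have h4 : p.height = 0 := by
            rw [Ideal.height_eq_zero_iff]; exact hp'
          rw [h3, hht] at h4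
          exact absurd h4 (by simp)
      · intro i hi h3 _
        rcases Finset.mem_insert.1 hi with rfl | hp
        · exact absurd rfl h3
        · exact Ideal.IsMinimalPrime.isPrime (hfin.mem_toFinset.1 hp)
    obtain ⟨x, hx, hx2, hxp⟩ := hex
    have hne : Ideal.span {x} ≠ ⊤ := by
      intro h
      have : Ideal.span {x} ≤ maximalIdeal R := by
        rw [Ideal.span_le]; simpa using hx
      rw [h, top_le_iff] at this
      exact (maximalIdeal.isMaximal R).ne_top this
    have : Nontrivial (R ⧸ Ideal.span {x}) := Ideal.Quotient.nontrivial_iff.2 hne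
    have : IsLocalRing (R ⧸ Ideal.span {x}) :=
      IsLocalRing.of_surjective' (Ideal.Quotient.mk (Ideal.span {x})) Ideal.Quotient.mk_surjective
    have hq := quot_gens n h2 x hx hx2
    have hdq : ((n : ℕ) : WithBot ℕ∞) ≤ ringKrullDim (R ⧸ Ideal.span {x}) := by
      have h5 := Ideal.height_le_ringKrullDim_quotient_add_one (r := x) (p := maximalIdeal R) hx
      rw [hht] at h5
      have h6 : ((n : ℕ) : WithBot ℕ∞) + 1 ≤ ringKrullDim (R ⧸ Ideal.span {x}) + 1 := by
        exact_mod_cast h5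
      exact ENat.WithBot.add_le_add_one_right_iff.1 h6
    have hreg : IsRegularLocalRing (R ⧸ Ideal.span {x}) :=
      IsRegularLocalRing.of_spanFinrank_maximalIdeal_le _
        (le_trans (by exact_mod_cast hq) hdq)
    have hdq' : ringKrullDim (R ⧸ Ideal.span {x}) = n := by
      refine le_antisymm ?_ hdq
      rw [← hreg.spanFinrank_maximalIdeal]
      exact_mod_cast hq
    obtain ⟨hdom, rs', hrs1, hrs2, hrs3⟩ := ih (R ⧸ Ideal.span {x}) hdq'
    have hprime : (Ideal.span {x}).IsPrime := (Ideal.Quotient.isDomain_iff_prime _).1 hdom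
    have hdomR : IsDomain R := by
      obtain ⟨p, hp, hple⟩ := Ideal.exists_minimalPrimes_le (I := (⊥ : Ideal R)) (J := Ideal.span {x}) bot_le
      have := Ideal.IsMinimalPrime.isPrime hp
      have hpb : p = ⊥ := by
        apply Submodule.eq_bot_of_le_smul_of_le_jacobson_bot (Ideal.span {x}) _
          p.fg_of_isNoetherianRing
        · intro y hy
          obtain ⟨z, rfl⟩ := Ideal.mem_span_singleton'.1 (hple hy)
          have hz : z ∈ p := (this.mem_or_mem hy).resolve_right (hxp p hp)
          rw [mul_comm]
          exact Submodule.smul_mem_smul (Ideal.mem_span_singleton_self x) hz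
        · rw [Ideal.span_le, Set.singleton_subset_iff]
          exact IsLocalRing.maximalIdeal_le_jacobson _ hx
      rw [hpb] at this
      exact IsDomain.of_bot_isPrime R
    refine ⟨hdomR, ?_⟩
    have hx0 : x ≠ 0 := by
      rintro rfl
      exact hx2 (Submodule.zero_mem _)
    let rs : List R := rs'.map (Function.surjInv Ideal.Quotient.mk_surjective)
    have hrs : rs.map (Ideal.Quotient.mk (Ideal.span {x})) = rs' := by
      simp only [rs, List.map_map]
      conv_rhs => rw [← List.map_id rs']
      apply List.map_congr_left
      intro y _
      exact Function.surjInv_eq Ideal.Quotient.mk_surjective y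
    refine ⟨x :: rs, ?_, by simp [rs, hrs2], ?_⟩
    · rw [isWeaklyRegular_cons_iff]
      refine ⟨?_, ?_⟩
      · intro y z hyz
        exact mul_left_cancel₀ hx0 hyz
      · have h7 : IsWeaklyRegular (R ⧸ Ideal.span {x}) rs := by
          rw [← isWeaklyRegular_map_algebraMap_iff (S := R ⧸ Ideal.span {x})]
          have : rs.map (algebraMap R (R ⧸ Ideal.span {x})) = rs' := hrs
          rw [this]; exact hrs1
        have e : (R ⧸ Ideal.span {x}) ≃ₗ[R] QuotSMulTop x R :=
          Submodule.quotEquivOfEq _ _ (by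
            rw [← Submodule.ideal_span_singleton_smul, smul_eq_mul, Ideal.mul_top])
        exact (e.isWeaklyRegular_congr rs).1 h7
    · rw [Ideal.ofList_cons]
      have h8 : (Ideal.ofList rs).map (Ideal.Quotient.mk (Ideal.span {x})) =
          (maximalIdeal R).map (Ideal.Quotient.mk (Ideal.span {x})) := by
        rw [Ideal.map_ofList, hrs, hrs3]
        exact (IsLocalRing.map_maximalIdeal_of_surjective (Ideal.Quotient.mk (Ideal.span {x}))
          Ideal.Quotient.mk_surjective).symm
      have h9 := congrArg (Ideal.comap (Ideal.Quotient.mk (Ideal.span {x}))) h8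
      rw [Ideal.comap_map_of_surjective _ Ideal.Quotient.mk_surjective,
        Ideal.comap_map_of_surjective _ Ideal.Quotient.mk_surjective,
        ← RingHom.ker_eq_comap_bot, Ideal.mk_ker] at h9
      rw [sup_comm, h9, sup_eq_left, Ideal.span_le, Set.singleton_subset_iff]
      exact hx

end A2
end RegQ

namespace RegQ
section A3
open IsLocalRing RingTheory.Sequence CategoryTheory.Abelian

theorem pd_residue (R : Type u) [CommRing R] [IsRegularLocalRing R] (n : ℕ)
    (hn : ringKrullDim R = n) :
    projectiveDimension (ModuleCat.of.{u} R (R ⧸ maximalIdeal R)) = n := by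
  obtain ⟨-, rs, h1, h2, h3⟩ := regular_main n R hn
  have h4 := ModuleCat.projectiveDimension_quotient_eq_add_length_of_isWeaklyRegular
    (ModuleCat.of.{u} R R) rs h1 (by
      intro r hr; rw [← h3]; exact Ideal.subset_span hr)
  have h0 : projectiveDimension (ModuleCat.of.{u} R R) = 0 :=
    ModuleCat.projectiveDimension_eq_zero_of_projective _
  rw [h0, zero_add, h2] at h4
  rw [← h4]
  apply projectiveDimension_eq_of_iso
  exact (Submodule.quotEquivOfEq _ _ (by
    rw [h3]; exact (Ideal.mul_top _).symm)).toModuleIso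

theorem pd_le (R : Type u) [CommRing R] [IsRegularLocalRing R] (n : ℕ)
    (hn : ringKrullDim R = n) (M : ModuleCat.{u} R) [Module.Finite R M] :
    HasProjectiveDimensionLE M n := by
  suffices H : ∀ (I : Ideal R) (M : Type u) [AddCommGroup M] [Module R M] [Module.Finite R M],
      (∀ a ∈ I, ∀ x : M, a • x = 0) → HasProjectiveDimensionLE (ModuleCat.of R M) n from
    H ⊥ M (by rintro a ha x; rw [Ideal.mem_bot.1 ha, zero_smul])
  intro I
  induction I using IsNoetherian.induction with
  | hgt I ih =>
  intro M _ _ hfin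
  induction hfin using IsNoetherianRing.induction_on_isQuotientEquivQuotientPrime R with
  | subsingleton N =>
    intro _
    have : Limits.IsZero (ModuleCat.of R N) := ModuleCat.isZero_of_subsingleton _
    have := this.hasProjectiveDimensionLT_zero
    exact hasProjectiveDimensionLT_of_ge _ 0 (n + 1) (by omega)
  | exact N₁ N₂ N₃ f g hf hg hfg h₁ h₃ =>
    intro hI
    have hS : (ShortComplex.mk (ModuleCat.ofHom f) (ModuleCat.ofHom g) (by
        ext x; exact hfg.apply_apply_eq_zero x)).ShortExact :=
      { exact := by
          rw [ShortComplex.moduleCat_exact_iff]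
          intro x hx
          exact (hfg x).1 hx
        mono_f := (ModuleCat.mono_iff_injective _).2 hf
        epi_g := (ModuleCat.epi_iff_surjective _).2 hg }
    refine hS.hasProjectiveDimensionLT_X₂ (n + 1) (h₁ ?_) (h₃ ?_)
    · intro a ha x
      apply hf
      rw [map_smul, hI a ha, map_zero]
    · intro a ha x
      obtain ⟨y, rfl⟩ := hg x
      rw [← map_smul, hI a ha, map_zero]
  | quotient N p e =>
    intro hI
    have hIp : I ≤ p.1 := by
      intro a ha
      have := hI a ha (e.symm 1)
      rw [← map_smul, LinearEquiv.map_eq_zero_iff] at this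
      rw [← Ideal.Quotient.eq_zero_iff_mem, ← this]
      rw [Algebra.smul_def, mul_one]; rfl
    have key : HasProjectiveDimensionLE (ModuleCat.of R (R ⧸ p.1)) n := by
      by_cases hlt : I < p.1
      · apply ih p.1 hlt (R ⧸ p.1)
        intro a ha x
        rw [Algebra.smul_def]
        have : algebraMap R (R ⧸ p.1) a = 0 := Ideal.Quotient.eq_zero_iff_mem.2 ha
        rw [this, zero_mul]
      · by_cases hm : p.1 = maximalIdeal R
        · rw [hm, ← projectiveDimension_le_iff, pd_residue R n hn]
        · have hpm : ¬ (maximalIdeal R ≤ p.1) := fun h =>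
            hm (le_antisymm (le_maximalIdeal p.2.ne_top) h)
          obtain ⟨x, hx, hxp⟩ := Set.not_subset.1 hpm
          have hreg : IsSMulRegular (ModuleCat.of R (R ⧸ p.1)) x := by
            intro y z hyz
            change x • (y : R ⧸ p.1) = x • z at hyz
            rw [Algebra.smul_def, Algebra.smul_def] at hyz
            refine mul_left_cancel₀ ?_ hyz
            exact fun h => hxp (Ideal.Quotient.eq_zero_iff_mem.1 h)
          have h1 := ModuleCat.projectiveDimension_quotSMulTop_eq_succ_of_isSMulRegular
            (ModuleCat.of R (R ⧸ p.1)) x hreg hx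
          have h2 : HasProjectiveDimensionLE (ModuleCat.of R (QuotSMulTop x (R ⧸ p.1))) n := by
            apply ih (p.1 ⊔ Ideal.span {x})
            · refine lt_of_le_of_lt hIp (lt_of_le_of_ne le_sup_left ?_)
              intro h
              apply hxp
              have : x ∈ p.1 ⊔ Ideal.span {x} :=
                (le_sup_right : Ideal.span {x} ≤ _) (Ideal.mem_span_singleton_self x)
              rwa [← h] at this
            · intro a ha y
              obtain ⟨b, hb, c, hc, rfl⟩ := Submodule.mem_sup.1 ha
              obtain ⟨c', rfl⟩ := Ideal.mem_span_singleton'.1 hc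
              obtain ⟨y, rfl⟩ := Submodule.mkQ_surjective _ y
              have h3 : b • y = 0 := by
                rw [Algebra.smul_def]
                have : algebraMap R (R ⧸ p.1) b = 0 := Ideal.Quotient.eq_zero_iff_mem.2 hb
                rw [this, zero_mul]
              rw [← map_smul, add_smul, h3, zero_add, mul_comm, mul_smul]
              exact (Submodule.Quotient.mk_eq_zero _).2
                (Submodule.smul_mem_pointwise_smul _ _ _ trivial)
          rw [← projectiveDimension_le_iff] at h2 ⊢
          have h4 : projectiveDimension (ModuleCat.of R (R ⧸ p.1)) + 1 ≤ (n : WithBot ℕ∞) := by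
            rw [← h1]; exact h2
          refine le_trans ?_ h4
          exact le_add_of_nonneg_right zero_le_one
    exact hasProjectiveDimensionLT_of_iso e.symm.toModuleIso (n + 1)

end A3
section Ext
open CategoryTheory.Abelian

theorem ext_shift {C : Type u₁} [Category.{v₁} C] [Abelian C] [HasExt.{w} C]
    {S : ShortComplex C} (hS : S.ShortExact) (hinj : Injective S.X₂) (M : C) (n : ℕ)
    (h : Subsingleton (Ext M S.X₁ (n + 2))) : Subsingleton (Ext M S.X₃ (n + 1)) := by
  refine subsingleton_of_forall_eq 0 fun x => ?_
  obtain ⟨y, rfl⟩ := Ext.covariant_sequence_exact₃ M hS x rfl (Subsingleton.elim _ _)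
  have : y = 0 := Ext.eq_zero_of_injective y
  rw [this, Ext.zero_comp]

theorem injdim_of_ideal {A : Type u} [CommRing A] (n : ℕ) : ∀ (N : ModuleCat.{u} A),
    (∀ J : Ideal A, Subsingleton (Ext (ModuleCat.of.{u} A (A ⧸ J)) N (n + 1))) →
    HasInjectiveDimensionLE N n := by
  induction n with
  | zero =>
    intro N h
    rw [HasInjectiveDimensionLE, zero_add, ← injective_iff_hasInjectiveDimensionLT_one,
      ← Module.injective_iff_injective_object]
    apply Module.Baer.injective
    intro J g
    have hS : (ShortComplex.mk (ModuleCat.ofHom J.subtype) (ModuleCat.ofHom J.mkQ) (by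
        ext x; exact Ideal.Quotient.eq_zero_iff_mem.2 x.2)).ShortExact :=
      { exact := by
          rw [ShortComplex.moduleCat_exact_iff]
          intro x hx
          exact ⟨⟨x, (Submodule.Quotient.mk_eq_zero J).1 hx⟩, rfl⟩
        mono_f := (ModuleCat.mono_iff_injective _).2 J.injective_subtype
        epi_g := (ModuleCat.epi_iff_surjective _).2 J.mkQ_surjective }
    have h' : Subsingleton (Ext (ModuleCat.of.{u} A (A ⧸ J)) N 1) := h J
    obtain ⟨x₂, hx₂⟩ := Ext.contravariant_sequence_exact₁ hS N
      (Ext.mk₀ (ModuleCat.ofHom g : ModuleCat.of A J ⟶ N)) (n₁ := 1) rfl (Subsingleton.elim _ _)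
    obtain ⟨g', rfl⟩ := (Ext.mk₀_bijective _ _).2 x₂
    rw [Ext.mk₀_comp_mk₀, (Ext.mk₀_bijective _ _).1.eq_iff] at hx₂
    refine ⟨g'.hom, fun x hx => ?_⟩
    exact congrArg (fun k : ModuleCat.of A J ⟶ N => k.hom ⟨x, hx⟩) hx₂
  | succ n ih =>
    intro N h
    let S : ShortComplex (ModuleCat.{u} A) := ShortComplex.mk (Injective.ι N)
      (Limits.cokernel.π (Injective.ι N)) (by simp)
    have hS : S.ShortExact :=
      { exact := ShortComplex.exact_cokernel _
        mono_f := inferInstanceAs (Mono (Injective.ι N))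
        epi_g := inferInstanceAs (Epi (Limits.cokernel.π (Injective.ι N))) }
    have hinj : Injective S.X₂ := inferInstanceAs (Injective (Injective.under N))
    have h1 : HasInjectiveDimensionLE S.X₃ n := ih S.X₃ fun J => ext_shift hS hinj _ n (h J)
    exact (hS.hasInjectiveDimensionLT_X₃_iff n hinj).1 h1

theorem injdim_upper (A : Type u) [CommRing A] [IsNoetherianRing A] (d : ℕ)
    (h : ∀ (p : Ideal A) [p.IsPrime], IsRegularLocalRing (Localization.AtPrime p) ∧
      ringKrullDim (Localization.AtPrime p) ≤ d) (N : ModuleCat.{u} A) :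
    HasInjectiveDimensionLE N d := by
  apply injdim_of_ideal
  intro J
  have hfin : Module.Finite A (ModuleCat.of.{u} A (A ⧸ J)) :=
    inferInstanceAs (Module.Finite A (A ⧸ J))
  have h1 : HasProjectiveDimensionLE (ModuleCat.of.{u} A (A ⧸ J)) d := by
    rw [ModuleCat.hasProjectiveDimensionLE_iff_forall_maximalSpectrum]
    intro m
    obtain ⟨h2, h3⟩ := h m.1
    have h4 : ∃ k : ℕ, ringKrullDim (Localization.AtPrime m.1) = k ∧ k ≤ d := by
      have h5 := h2.spanFinrank_maximalIdeal
      rw [← h5] at h3 ⊢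
      exact ⟨_, rfl, by exact_mod_cast h3⟩
    obtain ⟨k, hk, hkd⟩ := h4
    have hlm := ModuleCat.localizedModule_isLocalizedModule (ModuleCat.of.{u} A (A ⧸ J))
      m.1.primeCompl
    have hfin' : Module.Finite (Localization.AtPrime m.1)
        ((ModuleCat.of.{u} A (A ⧸ J)).localizedModule m.1.primeCompl) :=
      Module.Finite.of_isLocalizedModule m.1.primeCompl
        ((ModuleCat.of.{u} A (A ⧸ J)).localizedModuleMkLinearMap m.1.primeCompl)
    have := pd_le (Localization.AtPrime m.1) k hk
      ((ModuleCat.of.{u} A (A ⧸ J)).localizedModule m.1.primeCompl)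
    exact hasProjectiveDimensionLT_of_ge _ (k + 1) (d + 1) (by omega)
  exact HasProjectiveDimensionLT.subsingleton _ (d + 1) _ le_rfl N

theorem dim_lower (A : Type u) [CommRing A] (n : ℕ)
    (h : ∀ N : ModuleCat.{u} A, HasInjectiveDimensionLE N n) (p : Ideal A) [p.IsPrime]
    (hreg : IsRegularLocalRing (Localization.AtPrime p)) :
    ringKrullDim (Localization.AtPrime p) ≤ n := by
  let R := Localization.AtPrime p
  let k : Type u := R ⧸ IsLocalRing.maximalIdeal R
  let M : ModuleCat.{u} A := ModuleCat.of A k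
  have h1 : HasProjectiveDimensionLE M n := by
    refine HasProjectiveDimensionLT.mk fun i hi Y e => ?_
    have := h Y
    exact e.eq_zero_of_hasInjectiveDimensionLT (n + 1) hi
  have h2 : HasProjectiveDimensionLE (M.localizedModule p.primeCompl) n :=
    M.localizedModule_hasProjectiveDimensionLE n p.primeCompl
  have hk : IsLocalizedModule p.primeCompl (LinearMap.id : M →ₗ[A] k) :=
    isLocalizedModule_id p.primeCompl k R
  have hlm := ModuleCat.localizedModule_isLocalizedModule M p.primeCompl
  let e : M.localizedModule p.primeCompl ≃ₗ[A] k :=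
    IsLocalizedModule.linearEquiv p.primeCompl (M.localizedModuleMkLinearMap p.primeCompl)
      (LinearMap.id : M →ₗ[A] k)
  let e' : M.localizedModule p.primeCompl ≃ₗ[R] k :=
    e.extendScalarsOfIsLocalization p.primeCompl R
  have h3 : HasProjectiveDimensionLE (ModuleCat.of R k) n :=
    hasProjectiveDimensionLT_of_iso e'.toModuleIso (n + 1)
  rw [← projectiveDimension_le_iff] at h3
  have h5 := hreg.spanFinrank_maximalIdeal
  rw [pd_residue R _ h5.symm] at h3
  rw [← h5]
  exact h3

end Ext
end RegQ

namespace RegQ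
section Qc
open TopologicalSpace

noncomputable def presIso {X : Scheme.{u}} {M N : X.Modules} (e : M ≅ N) (P : M.Presentation) :
    N.Presentation :=
  let e' : @Iso (SheafOfModules.{u} X.ringCatSheaf) _ M N :=
    ⟨e.hom, e.inv, e.hom_inv_id, e.inv_hom_id⟩
  have h : IsIso e'.hom := Iso.isIso_hom e'
  @SheafOfModules.Presentation.ofIsIso.{u, u, u} _ _ _ _ _ _ _ _ e'.hom h P

theorem pres_spec {A : CommRingCat.{u}} (M : (Spec A).Modules) [M.IsQuasicoherent] :
    Nonempty M.Presentation :=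
  have : IsIso M.fromTildeΓ := Scheme.Modules.isIso_fromTildeΓ_of_isQuasicoherent M
  ⟨presIso (asIso M.fromTildeΓ)
    (presentationTilde.{u} _ .univ (by simp) _ (Submodule.span_eq _))⟩

theorem pres_open {X : Scheme.{u}} (M : X.Modules) (U : X.Opens)
    (pres : (M.restrict U.ι).Presentation) : Nonempty (SheafOfModules.over M U).Presentation := by
  let e : SheafOfModules.{u} (X.ringCatSheaf.over U) ≌
    SheafOfModules.{u} (U : Scheme.{u}).ringCatSheaf := Scheme.Modules.overEquiv U
  let u : SheafOfModules.unit (X.ringCatSheaf.over U) ≅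
      e.inverse.obj (.unit (U : Scheme.{u}).ringCatSheaf) :=
    e.unitIso.app _ ≪≫ e.inverse.mapIso
      ((Scheme.Modules.overFunctorEquiv U).app (.unit X.ringCatSheaf) ≪≫
        Scheme.Modules.restrictUnitIso U.ι)
  have hp : PreservesColimitsOfSize.{u, u} e.inverse :=
    e.symm.toAdjunction.leftAdjoint_preservesColimits
  let P1 := pres.map e.inverse u
  let i : e.inverse.obj (M.restrict U.ι) ≅ SheafOfModules.over M U :=
    e.inverse.mapIso ((Scheme.Modules.overFunctorEquiv U).app M).symm ≪≫ (e.unitIso.app _).symm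
  exact ⟨SheafOfModules.Presentation.ofIsIso.{u} i.hom P1⟩

theorem qcoh_local {X : Scheme.{u}} (M : X.Modules)
    (h : ∀ x : X, ∃ (A : CommRingCat.{u}) (f : Spec A ⟶ X) (_ : IsOpenImmersion f),
      x ∈ f.opensRange ∧ (M.restrict f).IsQuasicoherent) : M.IsQuasicoherent := by
  choose A f hf hx hM using h
  have hp : ∀ x : X, Nonempty (SheafOfModules.over M (f x).opensRange).Presentation := by
    intro x
    have := hf x
    have := hM x
    obtain ⟨P⟩ := pres_spec (M.restrict (f x))
    apply pres_open
    let j := (f x).isoOpensRange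
    have P2 := Scheme.Modules.presentationRestrict j.inv P
    have e : (f x).opensRange.ι = j.inv ≫ f x := by simp [j]
    exact presIso ((Scheme.Modules.restrictFunctorCongr e ≪≫
        Scheme.Modules.restrictFunctorComp _ _).app M).symm P2
  let q : SheafOfModules.QuasicoherentData.{u, u, u, u} M :=
    { I := X
      X := fun x => (f x).opensRange
      coversTop := ?_
      presentation := fun x => (hp x).some }
  · exact q.isQuasicoherent
  rw [Opens.coversTop_iff]
  exact TopologicalSpace.IsOpenCover.mk (by
    ext x; simpa using ⟨x, hx x⟩)

end Qc
end RegQ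

namespace RegQ
section Abs
set_option linter.unusedSectionVars false

/-- Abstract data satisfied by the section functors on a finite affine cover. -/
structure LocData {𝒬 : Type u₁} [Category.{v₁} 𝒬] [Abelian 𝒬] {κ : Type} (A : κ → Type u)
    [∀ i, CommRing (A i)] (G : ∀ i, 𝒬 ⥤ ModuleCat.{u} (A i)) : Prop where
  lim : ∀ i, Nonempty (PreservesFiniteLimits (G i))
  colim : ∀ i, Nonempty (PreservesFiniteColimits (G i))
  zero : ∀ Q, (∀ i, IsZero ((G i).obj Q)) → IsZero Q
  rep : ∀ i (J : ModuleCat.{u} (A i)), Injective J → ∃ E, Nonempty ((G i).obj E ≅ J) ∧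
    (∀ Q, Function.Bijective ((G i).map : (Q ⟶ E) → _)) ∧ ∀ j, Injective ((G j).obj E)
  flasque : ∀ Q, (∀ j, Injective ((G j).obj Q)) → ∀ i, ∃ (E : 𝒬) (h : Q ⟶ E),
    (∀ Q, Function.Bijective ((G i).map : (Q ⟶ E) → _)) ∧ IsIso ((G i).map h) ∧
    ∀ j, Function.Surjective ((G j).map h) ∧
      Module.Injective (A j) (LinearMap.ker ((G j).map h).hom)

theorem inj_of_loc {𝒬 : Type u₁} [Category.{v₁} 𝒬] {ℳ : Type u₂} [Category.{v₂} ℳ]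
    (G : 𝒬 ⥤ ℳ) [G.PreservesMonomorphisms] (E : 𝒬)
    (hE : ∀ Q, Function.Bijective (G.map : (Q ⟶ E) → _)) (hI : Injective (G.obj E)) :
    Injective E where
  factors {Y Z} g f hf := by
    obtain ⟨k, hk⟩ := (hE Z).2 (Injective.factorThru (G.map g) (G.map f))
    refine ⟨k, (hE Y).1 ?_⟩
    rw [G.map_comp, hk, Injective.comp_factorThru]

section
variable {𝒬 : Type u₁} [Category.{v₁} 𝒬] [Abelian 𝒬] {κ : Type} [Finite κ] {A : κ → Type u}
  [∀ i, CommRing (A i)] {G : ∀ i, 𝒬 ⥤ ModuleCat.{u} (A i)}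

theorem isZero_of_mono_zero {C : Type u₁} [Category.{v₁} C] [HasZeroMorphisms C] {X Y : C}
    (f : X ⟶ Y) [Mono f] (h : f = 0) : IsZero X := by
  rw [IsZero.iff_id_eq_zero, ← cancel_mono f, h, comp_zero, comp_zero]

theorem isZero_of_epi_zero {C : Type u₁} [Category.{v₁} C] [HasZeroMorphisms C] {X Y : C}
    (f : X ⟶ Y) [Epi f] (h : f = 0) : IsZero Y := by
  rw [IsZero.iff_id_eq_zero, ← cancel_epi f, h, zero_comp, zero_comp]

theorem LocData.mono (D : LocData A G) {Q E : 𝒬} (h : Q ⟶ E) (hm : ∀ i, Mono ((G i).map h)) :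
    Mono h := by
  rw [Preadditive.mono_iff_isZero_kernel]
  apply D.zero
  intro i
  have := (D.lim i).some
  have := hm i
  apply isZero_of_mono_zero ((G i).map (kernel.ι h))
  rw [← cancel_mono ((G i).map h), ← Functor.map_comp, kernel.condition, Functor.map_zero,
    zero_comp]

theorem LocData.epi (D : LocData A G) {Q E : 𝒬} (h : Q ⟶ E) (hm : ∀ i, Epi ((G i).map h)) :
    Epi h := by
  rw [Preadditive.epi_iff_isZero_cokernel]
  apply D.zero
  intro i
  have := (D.colim i).some
  have := hm i
  apply isZero_of_epi_zero ((G i).map (cokernel.π h))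
  rw [← cancel_epi ((G i).map h), ← Functor.map_comp, cokernel.condition, Functor.map_zero,
    comp_zero]

theorem LocData.inj (D : LocData A G) (n : ℕ) : ∀ (Q : 𝒬), (∀ j, Injective ((G j).obj Q)) →
    {i | ¬ IsZero ((G i).obj Q)}.ncard ≤ n → Injective Q := by
  induction n with
  | zero =>
    intro Q _ hn
    have h0 : {i | ¬ IsZero ((G i).obj Q)} = ∅ :=
      (Set.ncard_eq_zero (Set.toFinite _)).1 (Nat.le_zero.1 hn)
    have : IsZero Q := D.zero Q fun i => by
      by_contra hi
      have : i ∈ {i | ¬ IsZero ((G i).obj Q)} := hi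
      rw [h0] at this
      exact this
    exact this.injective
  | succ n ih =>
    intro Q hQ hn
    by_cases hz : IsZero Q
    · exact hz.injective
    obtain ⟨i, hi⟩ : ∃ i, ¬ IsZero ((G i).obj Q) := by
      by_contra! hcon
      exact hz (D.zero Q hcon)
    obtain ⟨E, h, hE, hiso, hs⟩ := D.flasque Q hQ i
    have lim := fun i => (D.lim i).some
    have hEi : Injective E := inj_of_loc (G i) E hE (Injective.of_iso (asIso ((G i).map h)) (hQ i))
    have hepi : Epi h := D.epi h fun j => (ModuleCat.epi_iff_surjective _).2 (hs j).1
    have hK : ∀ j, Injective ((G j).obj (kernel h)) := by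
      intro j
      have h1 := (hs j).2
      have h2 : Injective (ModuleCat.of (A j) (LinearMap.ker ((G j).map h).hom)) :=
        (Module.injective_iff_injective_object _ _).1 h1
      exact Injective.of_iso ((PreservesKernel.iso (G j) h) ≪≫
        ModuleCat.kernelIsoKer ((G j).map h)).symm h2
    have hKi : Injective (kernel h) := by
      apply ih _ hK
      have hsub : {i | ¬ IsZero ((G i).obj (kernel h))} ⊂ {i | ¬ IsZero ((G i).obj Q)} := by
        refine ⟨fun j hj hjz => hj ?_, fun hcon => hcon hi ?_⟩
        · exact isZero_of_mono_zero ((G j).map (kernel.ι h)) (hjz.eq_zero_of_tgt _)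
        · apply isZero_of_mono_zero ((G i).map (kernel.ι h))
          rw [← cancel_mono ((G i).map h), ← Functor.map_comp, kernel.condition,
            Functor.map_zero, zero_comp]
      have := Set.ncard_lt_ncard hsub (Set.toFinite _)
      omega
    let S : ShortComplex 𝒬 := ShortComplex.mk (kernel.ι h) h (by simp)
    have hS : S.ShortExact :=
      { exact := ShortComplex.exact_kernel _
        mono_f := inferInstanceAs (Mono (kernel.ι h))
        epi_g := hepi }
    rw [injective_iff_hasInjectiveDimensionLT_one] at *
    exact hS.hasInjectiveDimensionLT_X₂ 1 hKi hEi

theorem LocData.enough (D : LocData A G) (N : 𝒬) : ∃ (E : 𝒬) (f : N ⟶ E), Mono f ∧ Injective E ∧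
    ∀ j, Injective ((G j).obj E) := by
  have lim := fun i => (D.lim i).some
  choose E e hE hEj using fun i => D.rep i (Injective.under ((G i).obj N)) inferInstance
  have hj : ∀ j, Injective ((G j).obj (∏ᶜ E)) := by
    intro j
    have : Injective (∏ᶜ fun i => (G j).obj (E i)) := by
      have := fun i => hEj i j
      infer_instance
    exact Injective.of_iso (PreservesProduct.iso (G j) E).symm this
  choose m hm using fun i => (hE i N).2 (Injective.ι ((G i).obj N) ≫ (e i).some.inv)
  refine ⟨∏ᶜ E, Pi.lift m, ?_, D.inj _ _ hj le_rfl, hj⟩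
  apply D.mono
  intro i
  have h1 : Mono ((G i).map (Pi.lift m) ≫ (G i).map (Pi.π E i)) := by
    rw [← Functor.map_comp, Pi.lift_π, hm]
    infer_instance
  exact mono_of_mono _ ((G i).map (Pi.π E i))

theorem ses_coker {C : Type u₁} [Category.{v₁} C] [Abelian C] {X Y : C} (f : X ⟶ Y) [Mono f] :
    (ShortComplex.mk f (cokernel.π f) (by simp)).ShortExact :=
  { exact := ShortComplex.exact_cokernel _
    mono_f := inferInstanceAs (Mono f)
    epi_g := inferInstanceAs (Epi (cokernel.π f)) }

theorem LocData.injdim (D : LocData A G) (n : ℕ) : ∀ (N : 𝒬), HasInjectiveDimensionLE N n ↔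
    ∀ i, HasInjectiveDimensionLE ((G i).obj N) n := by
  have lim := fun i => (D.lim i).some
  have colim := fun i => (D.colim i).some
  induction n with
  | zero =>
    intro N
    rw [HasInjectiveDimensionLE, zero_add, ← injective_iff_hasInjectiveDimensionLT_one]
    simp only [HasInjectiveDimensionLE, zero_add, ← injective_iff_hasInjectiveDimensionLT_one]
    constructor
    · intro hN i
      obtain ⟨E, f, hf, -, hE⟩ := D.enough N
      have h2 := hE i
      have hfr : f ≫ Injective.factorThru (𝟙 N) f = 𝟙 N := Injective.comp_factorThru _ _
      let r : Retract ((G i).obj N) ((G i).obj E) :=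
        ⟨(G i).map f, (G i).map (Injective.factorThru (𝟙 N) f), by
          rw [← Functor.map_comp, hfr, CategoryTheory.Functor.map_id]⟩
      rw [injective_iff_hasInjectiveDimensionLT_one] at h2 ⊢
      exact r.hasInjectiveDimensionLT 1
    · intro h
      exact D.inj _ N h le_rfl
  | succ n ih =>
    intro N
    obtain ⟨E, f, hf, hEi, hE⟩ := D.enough N
    have hS := ses_coker f
    rw [HasInjectiveDimensionLE, ← hS.hasInjectiveDimensionLT_X₃_iff n hEi]
    refine (ih _).trans (forall_congr' fun i => ?_)
    exact (hS.map_of_exact (G i)).hasInjectiveDimensionLT_X₃_iff n (hE i)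

theorem LocData.surj (D : LocData A G) (i : κ) (N : ModuleCat.{u} (A i)) :
    ∃ Q, Nonempty ((G i).obj Q ≅ N) := by
  have lim := fun i => (D.lim i).some
  let a := Injective.ι N
  let b := cokernel.π a ≫ Injective.ι (cokernel a)
  obtain ⟨E0, ⟨e0⟩, -⟩ := D.rep i (Injective.under N) inferInstance
  obtain ⟨E1, ⟨e1⟩, h1, -⟩ := D.rep i (Injective.under (cokernel a)) inferInstance
  obtain ⟨m, hm⟩ := (h1 E0).2 (e0.hom ≫ b ≫ e1.inv)
  refine ⟨kernel m, ⟨PreservesKernel.iso (G i) m ≪≫ kernel.mapIso ((G i).map m) b e0 e1 (by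
    rw [hm]; simp) ≪≫ kernelCompMono _ _ ≪≫ ?_⟩⟩
  exact (Abelian.imageIsoImage a) ≪≫ (imageMonoIsoSource a)

theorem LocData.ext_iff (D : LocData A G) [HasExt.{w} 𝒬] (n : ℕ) :
    (∀ M N : 𝒬, Subsingleton (Ext M N (n + 1))) ↔ ∀ N : 𝒬, HasInjectiveDimensionLE N n := by
  constructor
  · suffices H : ∀ (n : ℕ) (N : 𝒬), (∀ M : 𝒬, Subsingleton (Ext M N (n + 1))) →
        HasInjectiveDimensionLE N n from fun h N => H n N fun M => h M N
    intro n
    induction n with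
    | zero =>
      intro N h
      rw [HasInjectiveDimensionLE, zero_add, ← injective_iff_hasInjectiveDimensionLT_one,
        injective_iff_subsingleton_ext_one]
      exact h
    | succ n ih =>
      intro N h
      obtain ⟨E, f, hf, hEi, hE⟩ := D.enough N
      have hS := ses_coker f
      rw [HasInjectiveDimensionLE, ← hS.hasInjectiveDimensionLT_X₃_iff n hEi]
      exact ih _ fun M => ext_shift hS hEi M n (h M)
  · intro h M N
    have := h N
    exact HasInjectiveDimensionLT.subsingleton N (n + 1) (n + 1) le_rfl M

theorem LocData.main (D : LocData A G) [HasExt.{w} 𝒬] (n : ℕ) :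
    (∀ M N : 𝒬, Subsingleton (Ext M N (n + 1))) ↔
      ∀ i (N : ModuleCat.{u} (A i)), HasInjectiveDimensionLE N n := by
  rw [D.ext_iff]
  constructor
  · intro h i N
    obtain ⟨Q, ⟨e⟩⟩ := D.surj i N
    have := (D.injdim n Q).1 (h Q) i
    exact e.symm.retract.hasInjectiveDimensionLT (n + 1)
  · exact fun h N => (D.injdim n N).2 fun i => h i _

end
end Abs
end RegQ

namespace RegQ
section Geo
open TopologicalSpace

theorem restrict_lim {X Y : Scheme.{u}} (f : Y ⟶ X) [IsOpenImmersion f] :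
    PreservesFiniteLimits (Scheme.Modules.restrictFunctor f) := by
  constructor
  intro K _ _
  let e : Scheme.Modules.restrictFunctor f ⋙ Scheme.Modules.toPresheaf Y ≅
      Scheme.Modules.toPresheaf X ⋙ (Functor.whiskeringLeft _ _ Ab).obj f.opensFunctor.op :=
    Iso.refl _
  have i0 : PreservesFiniteLimits (Scheme.Modules.toPresheaf X) := inferInstance
  have i1 : PreservesLimitsOfShape K (Scheme.Modules.toPresheaf X) := inferInstance
  have i2 : PreservesLimitsOfShape K
      ((Functor.whiskeringLeft _ _ Ab.{u}).obj f.opensFunctor.op) := inferInstance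
  have i3 : PreservesLimitsOfShape K (Scheme.Modules.toPresheaf X ⋙
      (Functor.whiskeringLeft _ _ Ab.{u}).obj f.opensFunctor.op) :=
    @comp_preservesLimitsOfShape _ _ _ _ _ _ _ _ _ _ i1 i2
  have : PreservesLimitsOfShape K
      (Scheme.Modules.restrictFunctor f ⋙ Scheme.Modules.toPresheaf Y) :=
    preservesLimitsOfShape_of_natIso e.symm
  have : ReflectsLimitsOfShape K (Scheme.Modules.toPresheaf Y) :=
    reflectsLimitsOfShape_of_reflectsIsomorphisms
  exact preservesLimitsOfShape_of_reflects_of_preserves _ (Scheme.Modules.toPresheaf Y)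

theorem map_bij {C : Type u₁} [Category.{v₁} C] {D : Type u₂} [Category.{v₂} D] {L : C ⥤ D}
    {R : D ⥤ C} (adj : L ⊣ R) (M N : D) (h : IsIso (adj.counit.app M)) :
    Function.Bijective (R.map : (M ⟶ N) → _) := by
  have h1 : (R.map : (M ⟶ N) → _) = (adj.homEquiv _ _) ∘ 
      ((asIso (adj.counit.app M) : L.obj (R.obj M) ≅ M).homFromEquiv.symm) := by
    ext φ
    simp [Adjunction.homEquiv_unit]
  rw [h1]
  exact (Equiv.bijective _).comp (Equiv.bijective _)

theorem counit_iso {R : CommRingCat.{u}} (M : (Spec R).Modules) [M.IsQuasicoherent] :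
    IsIso ((tilde.adjunction (R := R)).counit.app M) :=
  Scheme.Modules.isIso_fromTildeΓ_of_isQuasicoherent M

/-- The section functor associated with an affine open. -/
noncomputable def Gf {X : Scheme.{u}} {R : CommRingCat.{u}} (f : Spec R ⟶ X) [IsOpenImmersion f] :
    X.Modules ⥤ ModuleCat.{u} R :=
  Scheme.Modules.restrictFunctor f ⋙ moduleSpecΓFunctor (R := R)

theorem Gf_lim {X : Scheme.{u}} {R : CommRingCat.{u}} (f : Spec R ⟶ X) [IsOpenImmersion f] :
    PreservesFiniteLimits (Gf f) := by
  have := restrict_lim f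
  have : (moduleSpecΓFunctor (R := R)).IsRightAdjoint := (tilde.adjunction (R := R)).isRightAdjoint
  unfold Gf
  exact comp_preservesFiniteLimits _ _

theorem Gf_colim {X : Scheme.{u}} {R : CommRingCat.{u}} (f : Spec R ⟶ X) [IsOpenImmersion f]
    {𝒬 : Type u₁} [Category.{v₁} 𝒬] (ι : 𝒬 ⥤ X.Modules) [PreservesFiniteColimits ι]
    (hima : ∀ Q : 𝒬, (ι.obj Q).IsQuasicoherent) :
    PreservesFiniteColimits (ι ⋙ Gf f) := by
  constructor
  intro K _ _
  let F := ι ⋙ Scheme.Modules.restrictFunctor f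
  let α : (ι ⋙ Gf f) ⋙ tilde.functor R ⟶ F :=
    Functor.whiskerLeft F (tilde.adjunction (R := R)).counit
  have hα : IsIso α := by
    apply +allowSynthFailures NatIso.isIso_of_isIso_app
    intro Q
    have := hima Q
    exact counit_iso ((ι.obj Q).restrict f)
  have : PreservesColimitsOfShape K F := inferInstance
  have : PreservesColimitsOfShape K ((ι ⋙ Gf f) ⋙ tilde.functor R) :=
    preservesColimitsOfShape_of_natIso (asIso α).symm
  exact preservesColimitsOfShape_of_reflects_of_preserves _ (tilde.functor R)

end Geo
end RegQ

namespace RegQ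
section Geo2
open TopologicalSpace

theorem isZero_of_sections {X : Scheme.{u}} (M : X.Modules) (h : ∀ U, Subsingleton Γ(M, U)) :
    IsZero M := by
  rw [IsZero.iff_id_eq_zero]
  apply Scheme.Modules.hom_ext
  intro U
  ext x
  have := h U
  exact Subsingleton.elim _ _

theorem sections_of_isZero {X : Scheme.{u}} (M : X.Modules) (h : IsZero M) (U : X.Opens) :
    Subsingleton Γ(M, U) := by
  refine subsingleton_of_forall_eq 0 fun x => ?_
  have h1 : (𝟙 M : M ⟶ M) = 0 := h.eq_zero_of_src _
  have h2 : (Scheme.Modules.Hom.app (𝟙 M) U) x = (Scheme.Modules.Hom.app (0 : M ⟶ M) U) x := by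
    rw [h1]
  exact h2

theorem sections_ext {X : Scheme.{u}} (M : X.Modules) (U : X.Opens) (s t : Γ(M, U))
    (h : ∀ x ∈ U, ∃ (V : X.Opens) (i : V ≤ U), x ∈ V ∧
      M.presheaf.map (homOfLE i).op s = M.presheaf.map (homOfLE i).op t) : s = t := by
  refine TopCat.Presheaf.section_ext (⟨M.presheaf, M.isSheaf⟩ : TopCat.Sheaf Ab.{u} X) U s t ?_
  intro x hx
  obtain ⟨V, i, hxV, e⟩ := h x hx
  have h1 := TopCat.Presheaf.germ_res_apply M.presheaf (homOfLE i) x hxV s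
  have h2 := TopCat.Presheaf.germ_res_apply M.presheaf (homOfLE i) x hxV t
  exact h1.symm.trans ((congrArg _ e).trans h2)

theorem isZero_of_cover {X : Scheme.{u}} (M : X.Modules)
    (h : ∀ x : X, ∃ (A : CommRingCat.{u}) (f : Spec A ⟶ X) (_ : IsOpenImmersion f),
      x ∈ f.opensRange ∧ IsZero (M.restrict f)) : IsZero M := by
  apply isZero_of_sections
  intro U
  refine ⟨fun s t => sections_ext M U s t fun x hx => ?_⟩
  obtain ⟨A, f, hf, ⟨y, rfl⟩, hz⟩ := h x
  refine ⟨f ''ᵁ (f ⁻¹ᵁ U), ?_, ?_, ?_⟩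
  · rw [Scheme.Hom.image_preimage_eq_opensRange_inf]
    exact inf_le_right
  · exact ⟨y, hx, rfl⟩
  · have : Subsingleton Γ(M, f ''ᵁ (f ⁻¹ᵁ U)) := sections_of_isZero _ hz (f ⁻¹ᵁ U)
    exact Subsingleton.elim _ _

theorem stalk_torsion {R : CommRingCat.{u}} (J : ModuleCat.{u} R) (x : PrimeSpectrum.Top R)
    (a : R) (ha : a ∉ x.asIdeal) (hJ : ∀ j : J, ∃ n : ℕ, a ^ n • j = 0) :
    Subsingleton ((tilde J).presheaf.stalk x) := by
  refine subsingleton_of_forall_eq 0 fun z => ?_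
  have hx : x.asIdeal.IsPrime := x.2
  obtain ⟨⟨j, s⟩, hz⟩ := IsLocalizedModule.mk'_surjective x.asIdeal.primeCompl
    (tilde.toStalk J x).hom z
  obtain ⟨n, hn⟩ := hJ j
  rw [← hz, Function.uncurry_apply_pair, IsLocalizedModule.mk'_eq_zero']
  exact ⟨⟨a ^ n, fun hc => ha (hx.mem_of_pow_mem _ hc)⟩, hn⟩

theorem tilde_torsion {R : CommRingCat.{u}} (J : ModuleCat.{u} R) (V : (Spec R).Opens)
    (h : ∀ x ∈ V, ∃ a : R, a ∉ x.asIdeal ∧ ∀ j : J, ∃ n : ℕ, a ^ n • j = 0) :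
    Subsingleton Γ(tilde J, V) := by
  refine ⟨fun s t => ?_⟩
  refine TopCat.Presheaf.section_ext
    (⟨(tilde J).presheaf, (tilde J).isSheaf⟩ : TopCat.Sheaf Ab.{u} (Spec R)) V s t ?_
  intro x hx
  obtain ⟨a, ha, hJ⟩ := h x hx
  exact (stalk_torsion J x a ha hJ).elim _ _

end Geo2
end RegQ

namespace RegQ
section Geo3
open TopologicalSpace

theorem gamma_push {R S : CommRingCat.{u}} (φ : R ⟶ S) (M : (Spec S).Modules) :
    Nonempty ((moduleSpecΓFunctor (R := R)).obj
      ((Scheme.Modules.pushforward (Spec.map φ)).obj M) ≅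
      (ModuleCat.restrictScalars φ.hom).obj ((moduleSpecΓFunctor (R := S)).obj M)) :=
  ⟨((TopCat.Sheaf.forget _ _) ⋙ (evaluation _ _).obj (.op ⊤)).mapIso
    ((pushforwardCompModulesSpecToSheafIso φ).app M)⟩

theorem push_tilde {R S : CommRingCat.{u}} (φ : R ⟶ S) (N : ModuleCat.{u} S) :
    Nonempty ((Scheme.Modules.pushforward (Spec.map φ)).obj (tilde N) ≅
      tilde ((ModuleCat.restrictScalars φ.hom).obj N)) := by
  have h0 : IsIso (tilde N).fromTildeΓ := Scheme.Modules.isIso_fromTildeΓ_of_isQuasicoherent _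
  have := isIso_fromTildeΓ_pushforward φ (tilde N)
  obtain ⟨e⟩ := gamma_push φ (tilde N)
  exact ⟨(asIso (((Scheme.Modules.pushforward (Spec.map φ)).obj (tilde N)).fromTildeΓ)).symm ≪≫
    (tilde.functor R).mapIso (e ≪≫ (ModuleCat.restrictScalars φ.hom).mapIso (tilde.isoTop N).symm)⟩

theorem restrict_inj {R S : CommRingCat.{u}} (φ : R ⟶ S) (h : φ.hom.Flat) (N : ModuleCat.{u} S)
    (hN : Injective N) : Injective ((ModuleCat.restrictScalars φ.hom).obj N) := by
  have := ModuleCat.preservesFiniteLimits_extendScalars_of_flat h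
  have : (ModuleCat.extendScalars φ.hom).PreservesMonomorphisms := inferInstance
  exact Injective.injective_of_adjoint (ModuleCat.extendRestrictScalarsAdj φ.hom) N

theorem loc_inj (A : CommRingCat.{u}) [IsNoetherianRing A] (J : ModuleCat.{u} A)
    (hJ : Module.Injective A J) (a : A) (hb : Function.Bijective (fun x : J => a • x)) :
    ∃ N : ModuleCat.{u} (CommRingCat.of (Localization.Away a)), Injective N ∧
      Nonempty (J ≅ (ModuleCat.restrictScalars
        (CommRingCat.ofHom (algebraMap A (Localization.Away a))).hom).obj N) := by
  let N := LocalizedModule (Submonoid.powers a) J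
  let l := LocalizedModule.mkLinearMap (Submonoid.powers a) J
  have hunit : ∀ s : Submonoid.powers a, IsUnit (algebraMap A (Module.End A J) s) := by
    rintro ⟨_, n, rfl⟩
    simp only [map_pow]
    apply IsUnit.pow
    rw [Module.End.isUnit_iff]
    exact hb
  have hid : IsLocalizedModule (Submonoid.powers a) (LinearMap.id : J →ₗ[A] J) :=
    ⟨hunit, fun y => ⟨(y, 1), by simp⟩, fun {x y} h => ⟨1, by simpa using h⟩⟩
  let e : J ≃ₗ[A] N := IsLocalizedModule.linearEquiv (Submonoid.powers a) LinearMap.id l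
  have hN : Module.Injective (Localization.Away a) N :=
    Module.injective_of_isLocalizedModule (Submonoid.powers a) l
  refine ⟨ModuleCat.of (Localization.Away a) N, ?_, ?_⟩
  · rwa [← Module.injective_iff_injective_object]
  · let N' := (ModuleCat.restrictScalars
      (CommRingCat.ofHom (algebraMap A (Localization.Away a))).hom).obj
      (ModuleCat.of (Localization.Away a) N)
    let e1 : J ≃+ N' := e.toAddEquiv
    let e2 : J ≃ₗ[A] N' := { e1 with
      map_smul' := fun r x => (e.map_smul r x).trans
        (algebraMap_smul (Localization.Away a) r (e x)).symm }
    exact ⟨e2.toModuleIso⟩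

theorem exists_list (A : CommRingCat.{u}) [IsNoetherianRing A] (W : (Spec A).Opens) :
    ∃ l : List A, ∀ x : Spec A, x ∈ W ↔ ∃ a ∈ l, a ∉ PrimeSpectrum.asIdeal x := by
  have h1 : IsCompact (W.1 : Set (PrimeSpectrum A)) :=
    NoetherianSpace.isCompact (α := PrimeSpectrum A) _
  obtain ⟨t, ht⟩ := PrimeSpectrum.isCompact_isOpen_iff.1 ⟨h1, W.2⟩
  refine ⟨t.toList, fun x => ?_⟩
  have h2 : x ∈ W ↔ ¬ ((t : Set A) ⊆ PrimeSpectrum.asIdeal x) :=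
    (Set.ext_iff.1 ht x).symm
  rw [h2, Set.not_subset]
  simp

theorem bij_tilde {X : Scheme.{u}} {A B : CommRingCat.{u}} [IsNoetherianRing A] (f : Spec A ⟶ X)
    (g : Spec B ⟶ X) [IsOpenImmersion f] [IsOpenImmersion g] (J : ModuleCat.{u} A)
    (hJ : Module.Injective A J) (a : A) (hb : Function.Bijective (fun x : J => a • x))
    (ha : ∀ x : Spec A, a ∉ PrimeSpectrum.asIdeal x → f x ∈ g.opensRange) :
    ∃ L : ModuleCat.{u} B, Injective L ∧ Nonempty ((Scheme.Modules.restrictFunctor g).obj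
      ((Scheme.Modules.pushforward f).obj (tilde J)) ≅ tilde L) := by
  obtain ⟨N, hN, ⟨e⟩⟩ := loc_inj A J hJ a hb
  let p : Spec (CommRingCat.of (Localization.Away a)) ⟶ Spec A :=
    Spec.map (CommRingCat.ofHom (algebraMap A (Localization.Away a)))
  have hp : IsOpenImmersion p := inferInstance
  have hr : Set.range (p ≫ f) ⊆ Set.range g := by
    rintro _ ⟨y, rfl⟩
    have : a ∉ PrimeSpectrum.asIdeal (p y) := by
      have h2 : p y ∈ Set.range (PrimeSpectrum.comap (algebraMap A (Localization.Away a))) := ⟨y, rfl⟩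
      rw [PrimeSpectrum.localization_away_comap_range (Localization.Away a) a] at h2
      exact h2
    simpa using ha _ this
  let q := IsOpenImmersion.lift g (p ≫ f) hr
  have hq : q ≫ g = p ≫ f := IsOpenImmersion.lift_fac _ _ _
  have hqo : IsOpenImmersion q := by
    have : IsOpenImmersion (q ≫ g) := by rw [hq]; infer_instance
    exact IsOpenImmersion.of_comp q g
  obtain ⟨ψ, hψ⟩ := Spec.map_surjective q
  have hfl : ψ.hom.Flat := by
    rw [← Flat.SpecMap_iff, hψ]; infer_instance
  obtain ⟨e1⟩ := push_tilde (CommRingCat.ofHom (algebraMap A (Localization.Away a))) N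
  obtain ⟨e2⟩ := push_tilde ψ N
  refine ⟨_, restrict_inj ψ hfl N hN, ⟨?_⟩⟩
  let G := Scheme.Modules.restrictFunctor g
  let i1 : tilde J ≅ (Scheme.Modules.pushforward p).obj (tilde N) :=
    (tilde.functor A).mapIso e ≪≫ e1.symm
  let i2 : (Scheme.Modules.pushforward f).obj ((Scheme.Modules.pushforward p).obj (tilde N)) ≅
    (Scheme.Modules.pushforward g).obj ((Scheme.Modules.pushforward q).obj (tilde N)) :=
    ((Scheme.Modules.pushforwardComp p f) ≪≫ Scheme.Modules.pushforwardCongr hq.symm ≪≫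
      (Scheme.Modules.pushforwardComp q g).symm).app (tilde N)
  let i3 := (Scheme.Modules.restrictFunctorAdjCounitIso g).app
    ((Scheme.Modules.pushforward q).obj (tilde N))
  let i4 := (Scheme.Modules.pushforwardCongr hψ.symm).app (tilde N)
  exact G.mapIso ((Scheme.Modules.pushforward f).mapIso i1 ≪≫ i2) ≪≫ i3 ≪≫ i4 ≪≫ e2


theorem lemma1 {X : Scheme.{u}} {A B : CommRingCat.{u}} [IsNoetherianRing A] (f : Spec A ⟶ X)
    (g : Spec B ⟶ X) [IsOpenImmersion f] [IsOpenImmersion g] (J : ModuleCat.{u} A)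
    (hJ : Module.Injective A J) :
    ∃ L : ModuleCat.{u} B, Injective L ∧ Nonempty ((Scheme.Modules.restrictFunctor g).obj
      ((Scheme.Modules.pushforward f).obj (tilde J)) ≅ tilde L) := by
  let F : ModuleCat.{u} A ⥤ (Spec B).Modules :=
    tilde.functor A ⋙ Scheme.Modules.pushforward f ⋙ Scheme.Modules.restrictFunctor g
  have hF : F.Additive := by
    have : PreservesFiniteLimits (Scheme.Modules.restrictFunctor g) := restrict_lim g
    have : (Scheme.Modules.restrictFunctor g).Additive :=
      Functor.additive_of_preserves_binary_products _
    infer_instance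
  have hF1 : PreservesBinaryBiproducts F := preservesBinaryBiproducts_of_preservesBiproducts F
  have hF2 : PreservesBinaryBiproducts (tilde.functor B) :=
    preservesBinaryBiproducts_of_preservesBiproducts _
  obtain ⟨l, hl⟩ := exists_list A (f ⁻¹ᵁ g.opensRange)
  refine decomp (fun J => ∃ L : ModuleCat.{u} B, Injective L ∧ Nonempty (F.obj J ≅ tilde L))
    ?_ ?_ l ?_ ?_ J hJ
  · rintro M N e ⟨L, hL, ⟨i⟩⟩
    exact ⟨L, hL, ⟨F.mapIso e.toModuleIso.symm ≪≫ i⟩⟩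
  · rintro M N ⟨L, hL, ⟨i⟩⟩ ⟨L', hL', ⟨i'⟩⟩
    refine ⟨L ⊞ L', inferInstance, ⟨F.mapIso (ModuleCat.biprodIsoProd M N).symm ≪≫
      F.mapBiprod M N ≪≫ biprod.mapIso i i' ≪≫ ((tilde.functor B).mapBiprod L L').symm⟩⟩
  · intro J hJ ht
    have hz : IsZero (F.obj J) := by
      apply isZero_of_sections
      intro U
      change Subsingleton Γ(tilde J, f ⁻¹ᵁ (g ''ᵁ U))
      apply tilde_torsion
      intro x hx
      obtain ⟨a, ha, hx⟩ := (hl x).1 (by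
        obtain ⟨y, -, hy⟩ := hx
        exact ⟨y, hy⟩)
      exact ⟨a, hx, ht a ha⟩
    refine ⟨ModuleCat.of B PUnit, (ModuleCat.isZero_of_subsingleton _).injective, ⟨hz.iso ?_⟩⟩
    exact (tilde.functor B).map_isZero (ModuleCat.isZero_of_subsingleton _)
  · intro J hJ a ha hb
    exact bij_tilde f g J hJ a hb fun x hx => (hl x).2 ⟨a, ha, hx⟩

theorem push_qcoh {X : Scheme.{u}} {A : CommRingCat.{u}} [IsNoetherianRing A] (f : Spec A ⟶ X)
    [IsOpenImmersion f] (J : ModuleCat.{u} A) (hJ : Module.Injective A J) :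
    ((Scheme.Modules.pushforward f).obj (tilde J)).IsQuasicoherent := by
  apply qcoh_local
  intro x
  obtain ⟨B, g, hg, hx⟩ : ∃ (B : CommRingCat.{u}) (g : Spec B ⟶ X) (_ : IsOpenImmersion g),
      x ∈ g.opensRange :=
    ⟨_, X.affineCover.f (X.affineCover.idx x),
      X.affineCover.map_prop _, X.affineCover.covers x⟩
  refine ⟨B, g, hg, hx, ?_⟩
  obtain ⟨L, hL, ⟨e⟩⟩ := lemma1 f g J hJ
  exact (SheafOfModules.isQuasicoherent (Spec B).ringCatSheaf).prop_of_iso e.symm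
    (inferInstance : (tilde L).IsQuasicoherent)

end Geo3
end RegQ

namespace RegQ
section Geo4
open TopologicalSpace

theorem splitEpi_iso {C : Type u₁} [Category.{v₁} C] {D : Type u₂} [Category.{v₂} D] {F F' : C ⥤ D}
    (τ : F ⟶ F') {M N : C} (e : M ≅ N) (h : IsSplitEpi (τ.app M)) : IsSplitEpi (τ.app N) := by
  refine ⟨⟨⟨F'.map e.inv ≫ section_ (τ.app M) ≫ F.map e.hom, ?_⟩⟩⟩
  simp [← CategoryTheory.Functor.map_comp]

theorem splitEpi_prod {A : Type u} [CommRing A] {D : Type u₂} [Category.{v₂} D] [Preadditive D]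
    {F F' : ModuleCat.{u} A ⥤ D} [F.Additive] [F'.Additive]
    (τ : F ⟶ F') (M N : ModuleCat.{u} A) (h : IsSplitEpi (τ.app M)) (h' : IsSplitEpi (τ.app N)) :
    IsSplitEpi (τ.app (ModuleCat.of A (M × N))) := by
  refine splitEpi_iso τ (ModuleCat.biprodIsoProd M N) ⟨⟨⟨
    F'.map biprod.fst ≫ section_ (τ.app M) ≫ F.map biprod.inl +
    F'.map biprod.snd ≫ section_ (τ.app N) ≫ F.map biprod.inr, ?_⟩⟩⟩
  simp only [Preadditive.add_comp, Category.assoc, NatTrans.naturality, IsSplitEpi.id_assoc]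
  rw [← CategoryTheory.Functor.map_comp, ← CategoryTheory.Functor.map_comp, ← Functor.map_add,
    biprod.total, CategoryTheory.Functor.map_id]

/-- Sections over an open of an affine scheme. -/
noncomputable def FU (B : CommRingCat.{u}) (U : (Spec B).Opens) : (Spec B).Modules ⥤ ModuleCat.{u} B :=
  modulesSpecToSheaf ⋙ TopCat.Sheaf.forget _ _ ⋙ (evaluation _ _).obj (.op U)

/-- Restriction of sections. -/
noncomputable def resU (B : CommRingCat.{u}) (U : (Spec B).Opens) : FU B ⊤ ⟶ FU B U :=
  Functor.whiskerLeft modulesSpecToSheaf (Functor.whiskerLeft (TopCat.Sheaf.forget _ _)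
    ((evaluation _ _).map (homOfLE le_top : U ⟶ ⊤).op))

theorem resU_apply (B : CommRingCat.{u}) (U : (Spec B).Opens) (M : (Spec B).Modules) (x : Γ(M, ⊤)) :
    ((resU B U).app M : _ → _) x = M.presheaf.map (homOfLE le_top : U ⟶ ⊤).op x := rfl

theorem resU_push (B C : CommRingCat.{u}) (U : (Spec B).Opens) (p : Spec C ⟶ Spec B)
    (h : p ⁻¹ᵁ U = ⊤) (K : (Spec C).Modules) :
    IsIso ((resU B U).app ((Scheme.Modules.pushforward p).obj K)) := by
  rw [ConcreteCategory.isIso_iff_bijective]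
  have h2 : IsIso (homOfLE le_top : p ⁻¹ᵁ U ⟶ ⊤) := by
    refine ⟨homOfLE h.ge, ?_, ?_⟩ <;> exact Subsingleton.elim _ _
  have h1 : IsIso (K.presheaf.map (homOfLE le_top : p ⁻¹ᵁ U ⟶ ⊤).op) := inferInstance
  have h3 := (ConcreteCategory.isIso_iff_bijective
    (K.presheaf.map (homOfLE le_top : p ⁻¹ᵁ U ⟶ ⊤).op)).1 h1
  exact h3

theorem FU_add (B : CommRingCat.{u}) (U : (Spec B).Opens) : (FU B U).Additive := by
  constructor
  intro M N a b
  ext x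
  rfl

theorem resU_split (B : CommRingCat.{u}) [IsNoetherianRing B] (U : (Spec B).Opens)
    (I : ModuleCat.{u} B) (hI : Module.Injective B I) : IsSplitEpi ((resU B U).app (tilde I)) := by
  have i1 := FU_add B U
  have i2 := FU_add B ⊤
  obtain ⟨l, hl⟩ := exists_list B U
  let τ := Functor.whiskerLeft (tilde.functor B) (resU B U)
  refine decomp (fun J => IsSplitEpi (τ.app J)) ?_ ?_ l ?_ ?_ I hI
  · intro M N e h
    exact splitEpi_iso τ e.toModuleIso h
  · intro M N h h'
    exact splitEpi_prod τ M N h h'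
  · intro J hJ ht
    have : Subsingleton Γ(tilde J, U) := by
      apply tilde_torsion
      intro x hx
      obtain ⟨a, ha, hx⟩ := (hl x).1 hx
      exact ⟨a, hx, ht a ha⟩
    have : IsZero ((FU B U).obj (tilde J)) := @ModuleCat.isZero_of_subsingleton _ _ _ this
    exact ⟨⟨⟨0, this.eq_of_src _ _⟩⟩⟩
  · intro J hJ a ha hb
    obtain ⟨N, hN, ⟨e⟩⟩ := loc_inj B J hJ a hb
    obtain ⟨e1⟩ := push_tilde (CommRingCat.ofHom (algebraMap B (Localization.Away a))) N
    have := resU_push B _ U (Spec.map (CommRingCat.ofHom (algebraMap B (Localization.Away a)))) (by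
      rw [eq_top_iff]
      rintro y -
      apply (hl _).2 ⟨a, ha, ?_⟩
      have h2 : Spec.map (CommRingCat.ofHom (algebraMap B (Localization.Away a))) y ∈
        Set.range (PrimeSpectrum.comap (algebraMap B (Localization.Away a))) := ⟨y, rfl⟩
      rw [PrimeSpectrum.localization_away_comap_range (Localization.Away a) a] at h2
      exact h2) (tilde N)
    exact splitEpi_iso (resU B U) (((tilde.functor B).mapIso e ≪≫ e1.symm).symm) inferInstance

theorem split_ker {B : Type u} [CommRing B] {M N : ModuleCat.{u} B} (φ : M ⟶ N)
    (h : IsSplitEpi φ) (hM : Module.Injective B M) :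
    Function.Surjective φ ∧ Module.Injective B (LinearMap.ker φ.hom) := by
  refine ⟨?_, ?_⟩
  · rw [← ModuleCat.epi_iff_surjective]; infer_instance
  · have hs : ∀ x, φ.hom ((section_ φ).hom x) = x := fun x =>
      congrArg (fun t : N ⟶ N => t.hom x) (IsSplitEpi.id φ)
    let r : M →ₗ[B] LinearMap.ker φ.hom :=
      LinearMap.codRestrict _ (LinearMap.id - (section_ φ).hom ∘ₗ φ.hom) (fun x => by
        simp [hs])
    have hr : ∀ x, r ((LinearMap.ker φ.hom).subtype x) = x := by
      intro x
      apply Subtype.ext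
      have : φ.hom x.1 = 0 := x.2
      simp [r, this]
    rw [Module.injective_iff_injective_object] at hM ⊢
    have : Retract (ModuleCat.of B (LinearMap.ker φ.hom)) M :=
      ⟨ModuleCat.ofHom (LinearMap.ker φ.hom).subtype, ModuleCat.ofHom r, by ext x; exact congrArg Subtype.val (hr x)⟩
    exact ⟨fun g f _ => ⟨Injective.factorThru (g ≫ this.i) f ≫ this.r, by simp⟩⟩

theorem transfer {X : Scheme.{u}} (M : X.Modules) (U V V' : X.Opens) (h : V = V') (i : V ≤ U)
    (i' : V' ≤ U) (hs : Function.Surjective (M.presheaf.map (homOfLE i).op)) :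
    Function.Surjective (M.presheaf.map (homOfLE i').op) ∧
    ∀ x, M.presheaf.map (homOfLE i).op x = 0 ↔ M.presheaf.map (homOfLE i').op x = 0 := by
  subst h
  exact ⟨hs, fun x => Iff.rfl⟩

theorem unit_res {X : Scheme.{u}} {A B : CommRingCat.{u}} [IsNoetherianRing B] (f : Spec A ⟶ X)
    (g : Spec B ⟶ X) [IsOpenImmersion f] [IsOpenImmersion g] (M : X.Modules) (I : ModuleCat.{u} B)
    (hI : Module.Injective B I) (e : M.restrict g ≅ tilde I) :
    Function.Surjective ((Gf g).map ((Scheme.Modules.restrictAdjunction f).unit.app M)) ∧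
    Module.Injective B
      (LinearMap.ker ((Gf g).map ((Scheme.Modules.restrictAdjunction f).unit.app M)).hom) := by
  let V : X.Opens := f ''ᵁ (f ⁻¹ᵁ (g ''ᵁ ⊤))
  have hV : V ≤ g ''ᵁ ⊤ := f.image_preimage_le _
  let W := g ⁻¹ᵁ V
  have hW : g ''ᵁ W = V := by
    change g ''ᵁ (g ⁻¹ᵁ V) = V
    rw [Scheme.Hom.image_preimage_eq_opensRange_inf]
    apply inf_eq_right.2
    exact hV.trans (by rw [Scheme.Hom.image_top_eq_opensRange])
  have hW' : g ''ᵁ W ≤ g ''ᵁ ⊤ := hW.le.trans hV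
  have hsp : IsSplitEpi ((resU B W).app (M.restrict g)) :=
    splitEpi_iso (resU B W) e.symm (resU_split B W I hI)
  have hinj : Module.Injective B ((FU B ⊤).obj (M.restrict g)) := by
    rw [Module.injective_iff_injective_object] at hI ⊢
    exact Injective.of_iso (tilde.isoTop I ≪≫ (moduleSpecΓFunctor (R := B)).mapIso e.symm) hI
  obtain ⟨h1, h2⟩ := split_ker _ hsp hinj
  obtain ⟨h3, h4⟩ := transfer M (g ''ᵁ ⊤) (g ''ᵁ W) V hW hW' hV h1
  let φ := (Gf g).map ((Scheme.Modules.restrictAdjunction f).unit.app M)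
  have hφ : ∀ x : Γ(M, g ''ᵁ ⊤), (φ : _ → _) x = M.presheaf.map (homOfLE hV).op x := by
    intro x
    have := Scheme.Modules.restrictAdjunction_unit_app_app f M (g ''ᵁ ⊤)
    exact congrArg (fun t => t x) this
  refine ⟨h3, ?_⟩
  have hk : LinearMap.ker φ.hom = LinearMap.ker ((resU B W).app (M.restrict g)).hom := by
    ext x
    exact (h4 x).symm
  change Module.Injective B (LinearMap.ker φ.hom)
  rw [hk]
  exact h2

end Geo4
end RegQ

namespace RegQ
section Geo5
open TopologicalSpace

/-- maps into a pushforward are determined by sections over the affine open -/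
theorem Gf_bij {X : Scheme.{u}} {A : CommRingCat.{u}} (f : Spec A ⟶ X) [IsOpenImmersion f]
    (M : X.Modules) (hM : M.IsQuasicoherent) (K : (Spec A).Modules) :
    Function.Bijective ((Gf f).map : (M ⟶ (Scheme.Modules.pushforward f).obj K) → _) := by
  have : (M.restrict f).IsQuasicoherent := Scheme.Modules.isQuasicoherent_restrictFunctor f M
  have h1 := map_bij (tilde.adjunction (R := A)) (M.restrict f) K (counit_iso (M.restrict f))
  let c : (Scheme.Modules.restrictFunctor f).obj ((Scheme.Modules.pushforward f).obj K) ≅ K :=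
    (Scheme.Modules.restrictFunctorAdjCounitIso f).app K
  let c' := (moduleSpecΓFunctor (R := A)).mapIso c
  have h2 := h1.comp ((Scheme.Modules.restrictAdjunction f).homEquiv M K).symm.bijective
  have h3 : ∀ t : M ⟶ (Scheme.Modules.pushforward f).obj K,
      (Gf f).map t ≫ c'.hom = ((moduleSpecΓFunctor (R := A)).map ∘
        ((Scheme.Modules.restrictAdjunction f).homEquiv M K).symm) t := by
    intro t
    simp only [Function.comp]
    rw [Adjunction.homEquiv_counit, CategoryTheory.Functor.map_comp]
    rfl
  have h4 : Function.Bijective (fun t : M ⟶ (Scheme.Modules.pushforward f).obj K =>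
      (Gf f).map t ≫ c'.hom) := by
    rw [funext h3]; exact h2
  exact (Function.Bijective.of_comp_iff' (c'.homToEquiv (Z := (Gf f).obj M)).bijective _).1 h4

theorem Gf_bij' {X : Scheme.{u}} {A : CommRingCat.{u}} (f : Spec A ⟶ X) [IsOpenImmersion f]
    (M N : X.Modules) (hM : M.IsQuasicoherent) (K : (Spec A).Modules)
    (e : N ≅ (Scheme.Modules.pushforward f).obj K) :
    Function.Bijective ((Gf f).map : (M ⟶ N) → _) := by
  have h := (Gf_bij f M hM K).comp (e.homToEquiv (Z := M)).bijective
  refine (Function.Bijective.of_comp_iff' (((Gf f).mapIso e).homToEquiv (Z := (Gf f).obj M)).bijective _).1 ?_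
  convert h using 1
  ext t
  simp

variable {X : Scheme.{u}} {𝒬 : Type u₁} [Category.{v₁} 𝒬] [Abelian 𝒬]

theorem locData {κ : Type} (A : κ → CommRingCat.{u}) [∀ i, IsNoetherianRing (A i)]
    (f : ∀ i, Spec (A i) ⟶ X) [∀ i, IsOpenImmersion (f i)]
    (hf : ∀ x : X, ∃ i, x ∈ (f i).opensRange)
    (ι : 𝒬 ⥤ X.Modules) [ι.Full] [ι.Faithful] [PreservesFiniteLimits ι] [PreservesFiniteColimits ι]
    (hima : ∀ Q : 𝒬, (ι.obj Q).IsQuasicoherent)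
    (himb : ∀ M : X.Modules, M.IsQuasicoherent → ∃ Q : 𝒬, Nonempty (ι.obj Q ≅ M)) :
    LocData (𝒬 := 𝒬) (fun i => (A i : Type u)) (fun i => ι ⋙ Gf (f i)) where
  lim i := by
    have := Gf_lim (f i)
    exact ⟨comp_preservesFiniteLimits _ _⟩
  colim i := ⟨Gf_colim (f i) ι hima⟩
  zero Q h := by
    have h1 : IsZero (ι.obj Q) := by
      apply isZero_of_cover
      intro x
      obtain ⟨i, hi⟩ := hf x
      refine ⟨A i, f i, inferInstance, hi, ?_⟩
      have := hima Q
      have : ((ι.obj Q).restrict (f i)).IsQuasicoherent :=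
        Scheme.Modules.isQuasicoherent_restrictFunctor (f i) _
      have := counit_iso ((ι.obj Q).restrict (f i))
      refine IsZero.of_iso ?_ (asIso ((tilde.adjunction (R := A i)).counit.app
        ((ι.obj Q).restrict (f i)))).symm
      exact (tilde.functor (A i)).map_isZero (h i)
    rw [IsZero.iff_id_eq_zero]
    apply ι.map_injective
    exact h1.eq_of_src _ _
  rep i J hJ := by
    have hJ' : Module.Injective (A i) J := by
      rwa [Module.injective_iff_injective_object]
    obtain ⟨E, ⟨e⟩⟩ := himb _ (push_qcoh (f i) J hJ')
    refine ⟨E, ⟨?_⟩, ?_, ?_⟩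
    · exact (Gf (f i)).mapIso e ≪≫ (moduleSpecΓFunctor (R := A i)).mapIso
        ((Scheme.Modules.restrictFunctorAdjCounitIso (f i)).app (tilde J)) ≪≫ (tilde.isoTop J).symm
    · intro Q
      exact (Gf_bij' (f i) _ _ (hima Q) _ e).comp ⟨ι.map_injective, ι.map_surjective⟩
    · intro j
      obtain ⟨L, hL, ⟨e'⟩⟩ := lemma1 (f i) (f j) J hJ'
      exact Injective.of_iso ((Gf (f j)).mapIso e ≪≫ (moduleSpecΓFunctor (R := A j)).mapIso e' ≪≫
        (tilde.isoTop L).symm).symm hL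
  flasque Q hQ i := by
    have hq : ∀ j, ∃ I : ModuleCat.{u} (A j), Module.Injective (A j) I ∧
        Nonempty ((ι.obj Q).restrict (f j) ≅ tilde I) := by
      intro j
      have := hima Q
      have : ((ι.obj Q).restrict (f j)).IsQuasicoherent :=
        Scheme.Modules.isQuasicoherent_restrictFunctor (f j) _
      have := counit_iso ((ι.obj Q).restrict (f j))
      refine ⟨(moduleSpecΓFunctor (R := A j)).obj ((ι.obj Q).restrict (f j)), ?_,
        ⟨(asIso ((tilde.adjunction (R := A j)).counit.app
        ((ι.obj Q).restrict (f j)))).symm⟩⟩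
      rw [Module.injective_iff_injective_object]
      exact hQ j
    obtain ⟨I, hI, ⟨eI⟩⟩ := hq i
    obtain ⟨E, ⟨e0⟩⟩ := himb _ (push_qcoh (f i) I hI)
    let e : ι.obj E ≅ (Scheme.Modules.pushforward (f i)).obj ((ι.obj Q).restrict (f i)) :=
      e0 ≪≫ (Scheme.Modules.pushforward (f i)).mapIso eI.symm
    let η : ι.obj Q ⟶ (Scheme.Modules.pushforward (f i)).obj ((ι.obj Q).restrict (f i)) :=
      (Scheme.Modules.restrictAdjunction (f i)).unit.app (ι.obj Q)
    have hh : ι.map (ι.preimage (η ≫ e.inv)) = η ≫ e.inv := ι.map_preimage _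
    refine ⟨E, ι.preimage (η ≫ e.inv), ?_, ?_, ?_⟩
    · intro Q
      exact (Gf_bij' (f i) _ _ (hima Q) _ e).comp ⟨ι.map_injective, ι.map_surjective⟩
    · have h1 : IsIso ((Scheme.Modules.restrictFunctor (f i)).map η) := by
        have h2 := (Scheme.Modules.restrictAdjunction (f i)).left_triangle_components (ι.obj Q)
        exact IsIso.of_isIso_fac_right h2
      change IsIso ((moduleSpecΓFunctor (R := A i)).map
        ((Scheme.Modules.restrictFunctor (f i)).map (ι.map (ι.preimage (η ≫ e.inv)))))
      rw [hh, CategoryTheory.Functor.map_comp]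
      infer_instance
    · intro j
      obtain ⟨I, hI, ⟨eI⟩⟩ := hq j
      obtain ⟨h1, h2⟩ := unit_res (f i) (f j) (ι.obj Q) I hI eI
      let c := (Gf (f j)).mapIso e.symm
      have hc : Function.Bijective c.hom := ConcreteCategory.bijective_of_isIso c.hom
      have h3 : (ι ⋙ Gf (f j)).map (ι.preimage (η ≫ e.inv)) = (Gf (f j)).map η ≫ c.hom := by
        rw [Functor.comp_map, hh, CategoryTheory.Functor.map_comp]
        rfl
      rw [h3]
      refine ⟨hc.2.comp h1, ?_⟩
      have h4 : LinearMap.ker ((Gf (f j)).map η ≫ c.hom).hom = LinearMap.ker ((Gf (f j)).map η).hom := by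
        ext x
        exact map_eq_zero_iff c.hom.hom hc.1
      rw [h4]
      exact h2

end Geo5
end RegQ

namespace RegQ
section Final
open TopologicalSpace

theorem dim_iff (X : Scheme.{u}) (n : ℕ) : topologicalKrullDim X ≤ (n : WithBot ℕ∞) ↔
    ∀ x : X, ringKrullDim (X.presheaf.stalk x) ≤ n := by
  have h : topologicalKrullDim X = Order.krullDim X :=
    Order.krullDim_eq_of_orderIso (irreducibleSetEquivPoints (α := X))
  rw [h, Order.krullDim_eq_iSup_coheight, iSup_le_iff]
  exact forall_congr' fun x => by rw [ringKrullDim_stalk_eq_coheight]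

theorem isRegularLocalRing_of (O : Type u) [CommRing O] [IsLocalRing O] [IsNoetherianRing O]
    (h : IsRegularLocal O) : IsRegularLocalRing O := by
  obtain ⟨s, hs, hc⟩ := h
  apply IsRegularLocalRing.of_spanFinrank_maximalIdeal_le
  rw [← hc, ← hs]
  have := Submodule.spanFinrank_span_le_ncard_of_finite (R := O) s.finite_toSet
  rw [Set.ncard_coe_finset] at this
  exact_mod_cast this

theorem stalk_equiv {X : Scheme.{u}} {A : CommRingCat.{u}} (f : Spec A ⟶ X) [IsOpenImmersion f]
    (y : Spec A) [(PrimeSpectrum.asIdeal y).IsPrime] :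
    Nonempty (X.presheaf.stalk (f y) ≃+* Localization.AtPrime (PrimeSpectrum.asIdeal y)) := by
  have e1 := (asIso (Scheme.Hom.stalkMap f y)).commRingCatIsoToRingEquiv
  let k : Algebra A ((Spec A).presheaf.stalk y) := StructureSheaf.stalkAlgebra A y
  have : IsLocalization.AtPrime ((Spec A).presheaf.stalk y) (PrimeSpectrum.asIdeal y) :=
    StructureSheaf.IsLocalization.to_stalk A y
  have e2 := IsLocalization.algEquiv (PrimeSpectrum.asIdeal y).primeCompl
    ((Spec A).presheaf.stalk y) (Localization.AtPrime (PrimeSpectrum.asIdeal y))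
  exact ⟨e1.trans e2.toRingEquiv⟩

theorem exists_cover (X : Scheme.{u}) [IsNoetherian X] : ∃ (m : ℕ) (A : Fin m → CommRingCat.{u})
    (f : ∀ i, Spec (A i) ⟶ X), (∀ i, IsNoetherianRing (A i)) ∧ (∀ i, IsOpenImmersion (f i)) ∧
    ∀ x : X, ∃ i, x ∈ Set.range (f i) := by
  have h : ∀ x : X, ∃ (B : CommRingCat.{u}) (g : Spec B ⟶ X), IsOpenImmersion g ∧
      x ∈ Set.range g := fun x =>
    ⟨_, X.affineCover.f (X.affineCover.idx x),
      X.affineCover.map_prop _, X.affineCover.covers x⟩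
  choose B g hg hx using h
  obtain ⟨t, ht⟩ := isCompact_univ.elim_finite_subcover (fun x => Set.range (g x))
    (fun x => (g x).isOpenEmbedding.isOpen_range) (fun x _ => Set.mem_iUnion.2 ⟨x, hx x⟩)
  let e := t.equivFin.symm
  refine ⟨t.card, fun i => B (e i), fun i => g (e i), fun i => ?_, fun i => hg _, fun x => ?_⟩
  · have := hg (e i)
    have : IsLocallyNoetherian (Spec (B (e i))) := isLocallyNoetherian_of_isOpenImmersion (g (e i))
    exact isLocallyNoetherian_Spec.1 this
  · have := ht (Set.mem_univ x)
    simp only [Set.mem_iUnion] at this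
    obtain ⟨z, hz, hxz⟩ := this
    refine ⟨e.symm ⟨z, hz⟩, ?_⟩
    have h3 : x ∈ Set.range (g (e (e.symm ⟨z, hz⟩))) := by
      rw [Equiv.apply_symm_apply]; exact hxz
    exact h3

end Final
end RegQ

/-- Let `X` be a regular noetherian scheme of Krull dimension `d`.  Then
the abelian category `Qcoh(X)` of quasi-coherent sheaves on `X` has global dimension
equal to `d`: `Ext^{n+1}` vanishes identically on `Qcoh(X)` if and only if `d ≤ n`.
Here `Qcoh(X)` is formalized as any abelian category `𝒬` equipped with a fully faithful
exact functor `ι` to the category `X.Modules` of sheaves of modules on `X` whose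
essential image consists exactly of the quasi-coherent sheaves. -/
theorem stmt_17 (X : Scheme.{u}) [IsNoetherian X]
    (hreg : ∀ x : X, IsRegularLocal (X.presheaf.stalk x))
    (d : ℕ) (hdim : topologicalKrullDim X = (d : WithBot ℕ∞))
    {𝒬 : Type u₁} [Category.{v₁} 𝒬] [Abelian 𝒬] [HasExt.{w} 𝒬]
    (ι : 𝒬 ⥤ X.Modules) [ι.Full] [ι.Faithful] [ι.Additive]
    [PreservesFiniteLimits ι] [PreservesFiniteColimits ι]
    (hima : ∀ Q : 𝒬, (ι.obj Q).IsQuasicoherent)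
    (himb : ∀ M : X.Modules, M.IsQuasicoherent → ∃ Q : 𝒬, Nonempty (ι.obj Q ≅ M)) :
    ∀ n : ℕ, (∀ M N : 𝒬, Subsingleton (Ext M N (n + 1))) ↔ d ≤ n := by
  intro n
  obtain ⟨m, A, f, hA, hf, hcov⟩ := RegQ.exists_cover X
  rw [(RegQ.locData A f (fun x => hcov x) ι hima himb).main n]
  have h1 : d ≤ n ↔ topologicalKrullDim X ≤ (n : WithBot ℕ∞) := by
    rw [hdim]; norm_cast
  rw [h1, RegQ.dim_iff]
  have hr : ∀ i (p : Ideal (A i)) [p.IsPrime], IsRegularLocalRing (Localization.AtPrime p) := by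
    intro i p hp
    obtain ⟨e⟩ := @RegQ.stalk_equiv _ _ (f i) _ (⟨p, hp⟩ : PrimeSpectrum (A i)) hp
    have := RegQ.isRegularLocalRing_of _ (hreg (f i (⟨p, hp⟩ : PrimeSpectrum (A i))))
    exact IsRegularLocalRing.of_ringEquiv e
  constructor
  · intro h x
    obtain ⟨i, y, rfl⟩ := hcov x
    have hy : (PrimeSpectrum.asIdeal y).IsPrime := PrimeSpectrum.isPrime y
    obtain ⟨e⟩ := RegQ.stalk_equiv (f i) y
    have := RegQ.dim_lower (A i) n (h i) (PrimeSpectrum.asIdeal y) (hr i _)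
    exact (ringKrullDim_eq_of_ringEquiv e).trans_le this
  · intro h i N
    refine RegQ.injdim_upper (A i) n (fun p hp => ⟨hr i p, ?_⟩) N
    obtain ⟨e⟩ := @RegQ.stalk_equiv _ _ (f i) _ (⟨p, hp⟩ : PrimeSpectrum (A i)) hp
    exact (ringKrullDim_eq_of_ringEquiv e).symm.trans_le (h _)
end

section
/- Let A be a hereditary abelian category and let X, Y be cochain complexes in A with zero differentials. Then the natural map Hom_{D(A)}(X, Y) → ∏_{n∈ℤ} Hom_A(X^n, Y^n) × ∏_{n∈ℤ} Ext¹_A(X^n, Y^{n-1}), sending f to the collection of its induced maps on cohomology together with the components Σ^n(π_{n-1} ∘ f ∘ ι_n), is a bijection. -/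
open CategoryTheory CategoryTheory.Limits CategoryTheory.Abelian

lemma exists_stupid {A : Type u} [Category.{v} A] [Abelian A] (P : CochainComplex A ℤ) (a : ℤ) :
    ∃ (B : CochainComplex A ℤ) (_ : B.IsStrictlyGE a) (i : B ⟶ P), (∀ k, Mono (i.f k)) ∧
      (∀ k, a ≤ k → IsIso (i.f k)) := by
  have key : ∀ k, ∃ (Z : A) (m : Z ⟶ P.X k), Mono m ∧ (a ≤ k → IsIso m) ∧
      (¬ a ≤ k → IsZero Z) := by
    intro k
    by_cases h : a ≤ k
    · exact ⟨P.X k, 𝟙 _, inferInstance, fun _ => inferInstance, fun h' => (h' h).elim⟩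
    · refine ⟨(⊥_ A), 0, ?_, fun h' => (h h').elim, fun _ => initialIsInitial.isZero⟩
      exact ⟨fun _ _ _ => (initialIsInitial (C := A)).isZero.eq_of_tgt _ _⟩
  choose Z m hm hiso hzero using key
  classical
  let d : ∀ k l, Z k ⟶ Z l := fun k l =>
    if h : a ≤ l then (haveI := hiso l h; m k ≫ P.d k l ≫ inv (m l)) else 0
  have hd : ∀ k l, l = k + 1 → d k l ≫ m l = m k ≫ P.d k l := by
    intro k l hl
    by_cases h : a ≤ l
    · have := hiso l h
      simp [d, h]
    · exact (hzero k (by omega)).eq_of_src _ _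
  let B : CochainComplex A ℤ :=
    { X := Z
      d := d
      shape := fun k l hkl => by
        by_cases h : a ≤ l
        · simp [d, P.shape k l hkl]
        · simp [d, h]
      d_comp_d' := fun k l j hkl hlj => by
        have h1 : l = k + 1 := hkl.symm
        have h2 : j = l + 1 := hlj.symm
        rw [← cancel_mono (m j), Category.assoc, hd l j h2, ← Category.assoc, hd k l h1]
        simp }
  refine ⟨B, ?_, { f := m, comm' := fun k l hkl => (hd k l hkl.symm).symm }, hm, hiso⟩
  rw [CochainComplex.isStrictlyGE_iff]
  intro k hk
  exact hzero k (by omega)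

lemma hom_zero {A : Type u} [Category.{v} A] [Abelian A] [HasExt.{w} A]
    [HasDerivedCategory A]
    (hhered : ∀ M N : A, Subsingleton (Ext M N 2)) (M H : A) (n : ℤ)
    (f : (DerivedCategory.singleFunctor A n).obj M ⟶
      ((DerivedCategory.singleFunctor A (n-1)).obj H)⟦(1 : ℤ)⟧) : f = 0 := by
  have h0 : Subsingleton ((DerivedCategory.singleFunctor A 0).obj M ⟶
      ((DerivedCategory.singleFunctor A 0).obj H)⟦(2 : ℤ)⟧) := by
    have := hhered M H
    exact (Ext.homEquiv (X := M) (Y := H) (n := 2)).symm.subsingleton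
  apply (shiftFunctor (DerivedCategory A) n).map_injective
  let e1 := ((DerivedCategory.singleFunctors A).shiftIso n 0 n (by simp)).app M
  let e2 := ((DerivedCategory.singleFunctors A).shiftIso (n-1) 0 (n-1) (by simp)).app H
  let K := (DerivedCategory.singleFunctor A (n-1)).obj H
  let e3 : (K⟦(1:ℤ)⟧)⟦n⟧ ≅ (K⟦(n-1 : ℤ)⟧)⟦(2:ℤ)⟧ :=
    (shiftFunctorAdd' (DerivedCategory A) 1 n (n+1) (by omega)).symm.app K ≪≫
      (shiftFunctorAdd' (DerivedCategory A) (n-1) 2 (n+1) (by omega)).app K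
  let e4 := e3 ≪≫ (shiftFunctor (DerivedCategory A) (2:ℤ)).mapIso e2
  rw [← cancel_epi e1.inv, ← cancel_mono e4.hom]
  exact h0.elim _ _

lemma section_of_ext {A : Type u} [Category.{v} A] [Abelian A] [HasExt.{w} A]
    [HasDerivedCategory A]
    (hhered : ∀ M N : A, Subsingleton (Ext M N 2)) (M : A) (n : ℤ) (B S : DerivedCategory A)
    (t : B ⟶ S) (e₀ : S ≅ (DerivedCategory.singleFunctor A n).obj M)
    (hB1 : B.IsGE (n-1)) (hB2 : B.IsLE n) (hS1 : S.IsGE n) (hS2 : S.IsLE n)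
    (hHt : IsIso ((DerivedCategory.homologyFunctor A n).map t)) : ∃ σ : S ⟶ B, σ ≫ t = 𝟙 S := by
  obtain ⟨K, k, δ, hT⟩ := Pretriangulated.distinguished_cocone_triangle₁ t
  have hK1 : K.IsGE (n-1) := by
    rw [DerivedCategory.isGE_iff]
    intro j hj
    exact (DerivedCategory.HomologySequence.exact₁ _ hT (j-1) j).isZero_of_both_zeros
      ((DerivedCategory.isZero_of_isGE S n (j-1) (by omega)).eq_of_src _ _)
      ((DerivedCategory.isZero_of_isGE B (n-1) j (by omega)).eq_of_tgt _ _)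
  have hK2 : K.IsLE (n-1) := by
    rw [DerivedCategory.isLE_iff]
    intro j hj
    refine (DerivedCategory.HomologySequence.exact₁ _ hT (j-1) j).isZero_of_both_zeros ?_ ?_
    · by_cases h : j = n + 1
      · obtain rfl : n = j - 1 := by omega
        refine (DerivedCategory.HomologySequence.epi_homologyMap_mor₂_iff _ hT (j-1) j).1 ?_
        exact inferInstanceAs (Epi ((DerivedCategory.homologyFunctor A (j-1)).map t))
      · by_cases h' : j = n
        · exact (DerivedCategory.isZero_of_isGE S n (j-1) (by omega)).eq_of_src _ _
        · exact (DerivedCategory.isZero_of_isLE S n (j-1) (by omega)).eq_of_src _ _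
    · by_cases h' : j = n
      · subst h'
        refine (DerivedCategory.HomologySequence.mono_homologyMap_mor₂_iff _ hT j).1 ?_
        exact inferInstanceAs (Mono ((DerivedCategory.homologyFunctor A j).map t))
      · exact (DerivedCategory.isZero_of_isLE B n j (by omega)).eq_of_tgt _ _
  obtain ⟨H, ⟨e⟩⟩ := K.exists_iso_singleFunctor_obj_of_isGE_of_isLE (n-1)
  have hδ : δ = 0 := by
    rw [← cancel_epi e₀.inv, ← cancel_mono ((shiftFunctor (DerivedCategory A) (1:ℤ)).map e.hom),
      comp_zero, zero_comp]
    exact hom_zero hhered M H n _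
  obtain ⟨σ, hσ⟩ := Pretriangulated.Triangle.coyoneda_exact₃ _ hT (𝟙 S) (by
    subst hδ; exact comp_zero)
  exact ⟨σ, hσ.symm⟩

lemma exists_section {A : Type u} [Category.{v} A] [Abelian A] [HasExt.{w} A]
    [HasDerivedCategory A]
    (hhered : ∀ M N : A, Subsingleton (Ext M N 2)) (M : A) (n : ℤ) (P : CochainComplex A ℤ)
    [P.IsStrictlyLE n] (s : P ⟶ (HomologicalComplex.single A (ComplexShape.up ℤ) n).obj M)
    [IsIso (DerivedCategory.Q.map s)] :
    ∃ (B : CochainComplex A ℤ) (_ : B.IsStrictlyGE (n-1)) (i : B ⟶ P)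
      (σ : DerivedCategory.Q.obj ((HomologicalComplex.single A (ComplexShape.up ℤ) n).obj M) ⟶
        DerivedCategory.Q.obj B), σ ≫ DerivedCategory.Q.map i ≫ DerivedCategory.Q.map s = 𝟙 _ := by
  obtain ⟨B, hB, i, hmono, hiso⟩ := exists_stupid P (n-1)
  refine ⟨B, hB, i, ?_⟩
  have hBle : B.IsStrictlyLE n := by
    rw [CochainComplex.isStrictlyLE_iff]
    intro k hk
    have := hiso k (by omega)
    exact (P.isZero_of_isStrictlyLE n k hk).of_iso (asIso (i.f k))
  have hq : QuasiIsoAt i n := by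
    rw [quasiIsoAt_iff' i (n-1) n (n+1) (by simp) (by simp)]
    have := hiso (n-1) (by omega)
    have := hiso n (by omega)
    have := hiso (n+1) (by omega)
    let φ := (HomologicalComplex.shortComplexFunctor' A (ComplexShape.up ℤ) (n-1) n (n+1)).map i
    have : Epi φ.τ₁ := inferInstanceAs (Epi (i.f (n-1)))
    have : IsIso φ.τ₂ := inferInstanceAs (IsIso (i.f (n)))
    have : Mono φ.τ₃ := inferInstanceAs (Mono (i.f (n+1)))
    exact ShortComplex.quasiIso_of_epi_of_isIso_of_mono φ
  have hHi : IsIso ((DerivedCategory.homologyFunctor A n).map (DerivedCategory.Q.map i)) := by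
    rw [quasiIsoAt_iff_isIso_homologyMap] at hq
    exact (NatIso.isIso_map_iff (DerivedCategory.homologyFunctorFactors A n) i).2 hq
  have hHt : IsIso ((DerivedCategory.homologyFunctor A n).map (DerivedCategory.Q.map i ≫
      DerivedCategory.Q.map s)) := by
    rw [Functor.map_comp]; infer_instance
  exact section_of_ext hhered M n _ _ _ (Iso.refl _) inferInstance inferInstance
    (inferInstanceAs (((DerivedCategory.singleFunctor A n).obj M).IsGE n))
    (inferInstanceAs (((DerivedCategory.singleFunctor A n).obj M).IsLE n)) hHt

lemma fac_aux {D : Type*} [Category D] {P S R B Z : D} (s : P ⟶ S) (t : R ⟶ S) [IsIso s] [IsIso t]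
    (σ : S ⟶ B) (i : B ⟶ P) (g : P ⟶ Z) (g' : R ⟶ B) (h : R ⟶ Z) (hσ : σ ≫ i ≫ s = 𝟙 S)
    (hg' : σ = inv t ≫ g') (hh : h = g' ≫ i ≫ g) : t ≫ inv s ≫ g = h := by
  have : inv s = σ ≫ i := by
    rw [← cancel_mono s]
    simp [hσ]
  rw [this, hg', hh]
  simp

lemma two_term {A : Type u} [Category.{v} A] [Abelian A] [HasExt.{w} A]
    [HasDerivedCategory A]
    (hhered : ∀ M N : A, Subsingleton (Ext M N 2)) (M : A) (n : ℤ) (Z : CochainComplex A ℤ)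
    (f : DerivedCategory.Q.obj ((HomologicalComplex.single A (ComplexShape.up ℤ) n).obj M) ⟶
        DerivedCategory.Q.obj Z) :
    ∃ (R : CochainComplex A ℤ) (_ : R.IsStrictlyGE (n-1)) (_ : R.IsStrictlyLE n)
      (s : R ⟶ (HomologicalComplex.single A (ComplexShape.up ℤ) n).obj M) (_ : QuasiIso s)
      (g : R ⟶ Z), DerivedCategory.Q.map s ≫ f = DerivedCategory.Q.map g := by
  obtain ⟨P, _, s, hs, g, rfl⟩ := DerivedCategory.right_fac_of_isStrictlyLE f n
  obtain ⟨B, hB, i, σ, hσ⟩ := exists_section hhered M n P s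
  have : CochainComplex.IsStrictlyGE
      ((HomologicalComplex.single A (ComplexShape.up ℤ) n).obj M) (n-1) :=
    CochainComplex.isStrictlyGE_of_ge _ (n-1) n (by omega)
  obtain ⟨R, h1, h2, t, ht, g', hg'⟩ :=
    DerivedCategory.right_fac_of_isStrictlyLE_of_isStrictlyGE (n-1) n σ
  refine ⟨R, h1, h2, t, (DerivedCategory.isIso_Q_map_iff_quasiIso _ _).1 ht, g' ≫ i ≫ g, ?_⟩
  exact fac_aux (DerivedCategory.Q.map s) (DerivedCategory.Q.map t) σ (DerivedCategory.Q.map i)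
    (DerivedCategory.Q.map g) (DerivedCategory.Q.map g') _ hσ hg' (by simp)

lemma has_coprod {A : Type u} [Category.{v} A] [Abelian A] (F : ℤ → A) (k : ℤ)
    (hF : ∀ n, n ≠ k → n ≠ k + 1 → IsZero (F n)) : HasCoproduct F := by
  classical
  let inj : ∀ n, F n ⟶ F k ⊞ F (k+1) := fun n =>
    if h : n = k then eqToHom (by rw [h]) ≫ biprod.inl
    else if h' : n = k + 1 then eqToHom (by rw [h']) ≫ biprod.inr else 0
  have h1 : inj k = biprod.inl := by simp [inj]
  have h2 : inj (k+1) = biprod.inr := by simp [inj]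
  refine ⟨⟨⟨Cofan.mk _ inj, Cofan.IsColimit.mk _ (fun s => biprod.desc (s.inj k) (s.inj (k+1)))
    ?_ ?_⟩⟩⟩
  · intro s n
    by_cases h : n = k
    · subst h
      simp [h1]
    · by_cases h' : n = k + 1
      · subst h'
        simp [h2]
      · exact (hF n h h').eq_of_src _ _
  · intro s m hm
    apply biprod.hom_ext'
    · rw [biprod.inl_desc, ← hm k, ← h1]; rfl
    · rw [biprod.inr_desc, ← hm (k+1), ← h2]; rfl

lemma homologyMap_congr {A : Type u} [Category.{v} A] [Abelian A] {K L : CochainComplex A ℤ}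
    (φ ψ : K ⟶ L) (n : ℤ) (h : φ.f n = ψ.f n) :
    HomologicalComplex.homologyMap φ n = HomologicalComplex.homologyMap ψ n := by
  rw [← cancel_epi (K.homologyπ n), HomologicalComplex.homologyπ_naturality,
    HomologicalComplex.homologyπ_naturality]
  congr 1
  rw [← cancel_mono (L.iCycles n)]
  simp [h]

lemma iso_homology {A : Type u} [Category.{v} A] [Abelian A] {K L E : CochainComplex A ℤ}
    (i : K ⟶ L) (p : L ⟶ K) (a : L ⟶ E) (b : E ⟶ L) (n : ℤ) (h1 : (i ≫ p).f n = 𝟙 _)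
    (h2 : 𝟙 _ = (p ≫ i + a ≫ b).f n) (h3 : HomologicalComplex.homologyMap a n = 0) :
    IsIso (HomologicalComplex.homologyMap i n) := by
  refine ⟨HomologicalComplex.homologyMap p n, ?_, ?_⟩
  · rw [← HomologicalComplex.homologyMap_comp, homologyMap_congr _ (𝟙 K) n (by simpa using h1),
      HomologicalComplex.homologyMap_id]
  · rw [← HomologicalComplex.homologyMap_id, ← homologyMap_congr _ (𝟙 L) n h2.symm,
      HomologicalComplex.homologyMap_add, HomologicalComplex.homologyMap_comp,
      HomologicalComplex.homologyMap_comp, h3, zero_comp, add_zero]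

lemma glue_complex {A : Type u} [Category.{v} A] [Abelian A] (R : ℤ → CochainComplex A ℤ)
    (h1 : ∀ n, (R n).IsStrictlyGE (n-1)) (h2 : ∀ n, (R n).IsStrictlyLE n)
    (h3 : ∀ n, IsZero ((R (n+1)).homology n)) :
    ∃ (T : CochainComplex A ℤ) (j : ∀ n, R n ⟶ T),
      (∀ (Z : CochainComplex A ℤ) (g : ∀ n, R n ⟶ Z), ∃ h : T ⟶ Z, ∀ n, j n ≫ h = g n) ∧
      ∀ n, IsIso (HomologicalComplex.homologyMap (j n) n) := by
  have hz : ∀ k n, n ≠ k → n ≠ k + 1 → IsZero ((R n).X k) := by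
    intro k n hk hk'
    by_cases h : n < k
    · exact (R n).isZero_of_isStrictlyLE n k h
    · exact (R n).isZero_of_isStrictlyGE (n-1) k (by omega)
  have hc : ∀ k : ℤ, HasColimit (Discrete.functor R ⋙
      HomologicalComplex.eval A (ComplexShape.up ℤ) k) := by
    intro k
    have := has_coprod (fun n => (R n).X k) k (hz k)
    exact hasColimit_of_iso (F := Discrete.functor (fun n => (R n).X k))
      (Discrete.natIso (fun _ => Iso.refl _))
  have hcop : HasCoproduct R := inferInstance
  classical
  let p : ∀ n, (∐ R) ⟶ R n := fun n => Sigma.desc (fun m =>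
    if h : m = n then eqToHom (by rw [h]) else 0)
  have hp1 : ∀ n, Sigma.ι R n ≫ p n = 𝟙 _ := by intro n; simp [p]
  have hp2 : ∀ m n, m ≠ n → Sigma.ι R m ≫ p n = 0 := by intro m n h; simp [p, h]
  refine ⟨∐ R, Sigma.ι R, fun Z g => ⟨Sigma.desc g, fun n => by simp⟩, fun n => ?_⟩
  refine iso_homology (Sigma.ι R n) (p n) (p (n+1)) (Sigma.ι R (n+1)) n ?_ ?_ ?_
  · rw [hp1]; rfl
  · have hcol := isColimitOfPreserves (HomologicalComplex.eval A (ComplexShape.up ℤ) n)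
      (colimit.isColimit (Discrete.functor R))
    refine hcol.hom_ext ?_
    rintro ⟨m⟩
    have key : (Sigma.ι R m).f n ≫ 𝟙 _ = (Sigma.ι R m).f n ≫
        (p n ≫ Sigma.ι R n + p (n+1) ≫ Sigma.ι R (n+1)).f n := by
      rw [← HomologicalComplex.comp_f, Preadditive.comp_add]
      by_cases h : m = n
      · subst h
        rw [reassoc_of% (hp1 m), reassoc_of% (hp2 m (m+1) (by omega))]
        simp
      · by_cases h' : m = n + 1
        · subst h'
          rw [reassoc_of% (hp1 (n+1)), reassoc_of% (hp2 (n+1) n (by omega))]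
          simp
        · exact (hz n m h h').eq_of_src _ _
    exact key
  · exact (h3 n).eq_of_tgt _ _

noncomputable def iotaC {A : Type u} [Category.{v} A] [Abelian A] (X : CochainComplex A ℤ)
    (hX : ∀ i j, X.d i j = 0) (n : ℤ) :
    (HomologicalComplex.single A (ComplexShape.up ℤ) n).obj (X.X n) ⟶ X :=
  HomologicalComplex.mkHomFromSingle (𝟙 (X.X n)) (fun k _ => by rw [hX, comp_zero])

noncomputable def piC {A : Type u} [Category.{v} A] [Abelian A] (X : CochainComplex A ℤ)
    (hX : ∀ i j, X.d i j = 0) (n : ℤ) :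
    X ⟶ (HomologicalComplex.single A (ComplexShape.up ℤ) n).obj (X.X n) :=
  HomologicalComplex.mkHomToSingle (𝟙 (X.X n)) (fun k _ => by rw [hX, zero_comp])

section
variable {A : Type u} [Category.{v} A] [Abelian A] (X : CochainComplex A ℤ)
    (hX : ∀ i j, X.d i j = 0)

lemma iota_pi (n : ℤ) : iotaC X hX n ≫ piC X hX n = 𝟙 _ := by
  apply HomologicalComplex.from_single_hom_ext
  simp [iotaC, piC]

lemma iota_pi_ne (m n : ℤ) (h : m ≠ n) : iotaC X hX m ≫ piC X hX n = 0 := by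
  apply HomologicalComplex.from_single_hom_ext
  simp [piC, HomologicalComplex.mkHomToSingle, h]

lemma pi_iota_f (n : ℤ) : (piC X hX n ≫ iotaC X hX n).f n = 𝟙 _ := by
  simp [iotaC, piC]

lemma pi_iota_f_ne (n k : ℤ) (h : k ≠ n) : (piC X hX n ≫ iotaC X hX n).f k = 0 := by
  simp [piC, HomologicalComplex.mkHomToSingle, h]

lemma iota_homology (n : ℤ) : IsIso (HomologicalComplex.homologyMap (iotaC X hX n) n) := by
  refine iso_homology (iotaC X hX n) (piC X hX n) (0 : X ⟶ X) 0 n ?_ ?_ ?_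
  · rw [iota_pi]; rfl
  · rw [comp_zero, add_zero, pi_iota_f]
  · simp

end

section
open DerivedCategory

lemma glue_surj {A : Type u} [Category.{v} A] [Abelian A] [HasExt.{w} A]
    [HasDerivedCategory A]
    (hhered : ∀ M N : A, Subsingleton (Ext M N 2)) (X : CochainComplex A ℤ)
    (hX : ∀ i j, X.d i j = 0) (Z : CochainComplex A ℤ)
    (f : ∀ n, Q.obj ((HomologicalComplex.single A (ComplexShape.up ℤ) n).obj (X.X n)) ⟶ Q.obj Z) :
    ∃ F : Q.obj X ⟶ Q.obj Z, ∀ n, Q.map (iotaC X hX n) ≫ F = f n := by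
  choose R h1 h2 s hs g hg using fun n => two_term hhered (X.X n) n Z (f n)
  have h3 : ∀ n, IsZero ((R (n+1)).homology n) := by
    intro n
    have hq := hs (n+1)
    have e := (HomologicalComplex.exactAt_single_obj (ComplexShape.up ℤ) (n+1) (X.X (n+1)) n
      (by omega)).isZero_homology
    exact e.of_iso (asIso (HomologicalComplex.homologyMap (s (n+1)) n))
  obtain ⟨T, j, hT, hj⟩ := glue_complex R h1 h2 h3
  obtain ⟨S, hS⟩ := hT X (fun n => s n ≫ iotaC X hX n)
  obtain ⟨G, hG⟩ := hT Z g
  have qS : QuasiIso S := by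
    rw [quasiIso_iff]
    intro n
    rw [quasiIsoAt_iff_isIso_homologyMap]
    have hq := hs n
    have i1 := hj n
    have i2 := iota_homology X hX n
    have e : HomologicalComplex.homologyMap (j n) n ≫ HomologicalComplex.homologyMap S n =
        HomologicalComplex.homologyMap (s n) n ≫
          HomologicalComplex.homologyMap (iotaC X hX n) n := by
      rw [← HomologicalComplex.homologyMap_comp, ← HomologicalComplex.homologyMap_comp, hS n]
    have i3 : IsIso (HomologicalComplex.homologyMap (j n) n ≫
        HomologicalComplex.homologyMap S n) := by
      rw [e]; infer_instance
    exact IsIso.of_isIso_comp_left (HomologicalComplex.homologyMap (j n) n) _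
  have iS : IsIso (Q.map S) := inferInstance
  refine ⟨inv (Q.map S) ≫ Q.map G, fun n => ?_⟩
  have hq := hs n
  have is : IsIso (Q.map (s n)) := inferInstance
  rw [← cancel_epi (Q.map (s n)), hg n, ← hG n, ← Category.assoc, ← Q.map_comp, ← hS n,
    Q.map_comp, Q.map_comp, Category.assoc, IsIso.hom_inv_id_assoc]

lemma glue_inj {A : Type u} [Category.{v} A] [Abelian A] [HasExt.{w} A]
    [HasDerivedCategory A]
    (hhered : ∀ M N : A, Subsingleton (Ext M N 2)) (X : CochainComplex A ℤ)
    (hX : ∀ i j, X.d i j = 0) (Z : CochainComplex A ℤ)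
    (F : Q.obj X ⟶ Q.obj Z) (hF : ∀ n, Q.map (iotaC X hX n) ≫ F = 0) : F = 0 := by
  obtain ⟨W, w, c, hW⟩ := Pretriangulated.distinguished_cocone_triangle₁ F
  have hw : w ≫ F = 0 := Pretriangulated.comp_distTriang_mor_zero₁₂ _ hW
  have hl : ∀ n, ∃ l : Q.obj ((HomologicalComplex.single A (ComplexShape.up ℤ) n).obj (X.X n)) ⟶ W,
      Q.map (iotaC X hX n) = l ≫ w := fun n =>
    Pretriangulated.Triangle.coyoneda_exact₂ _ hW (Q.map (iotaC X hX n)) (hF n)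
  choose l hl using hl
  obtain ⟨h, hh⟩ := glue_surj hhered X hX (Q.objPreimage W)
    (fun n => l n ≫ (Q.objObjPreimageIso W).inv)
  let k : Q.obj X ⟶ W := h ≫ (Q.objObjPreimageIso W).hom
  have hk : ∀ n, Q.map (iotaC X hX n) ≫ k ≫ w = Q.map (iotaC X hX n) := by
    intro n
    have hk' : Q.map (iotaC X hX n) ≫ k = l n := by
      rw [← Category.assoc, hh n, Category.assoc, Iso.inv_hom_id, Category.comp_id]
    rw [← Category.assoc, hk', ← hl n]
  have iso : IsIso (k ≫ w) := by
    rw [DerivedCategory.isIso_iff]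
    intro n
    have i1 : IsIso ((homologyFunctor A n).map (Q.map (iotaC X hX n))) := by
      refine (NatIso.isIso_map_iff (DerivedCategory.homologyFunctorFactors A n)
        (iotaC X hX n)).2 ?_
      exact iota_homology X hX n
    have i2 : IsIso ((homologyFunctor A n).map (Q.map (iotaC X hX n)) ≫
        (homologyFunctor A n).map (k ≫ w)) := by
      rw [← Functor.map_comp, hk n]; exact i1
    exact IsIso.of_isIso_comp_left ((homologyFunctor A n).map (Q.map (iotaC X hX n))) _
  rw [← cancel_epi (k ≫ w), Category.assoc, hw, comp_zero, comp_zero]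

lemma decomp {A : Type u} [Category.{v} A] [Abelian A] [HasExt.{w} A]
    [HasDerivedCategory A]
    (hhered : ∀ M N : A, Subsingleton (Ext M N 2)) (M : A) (n : ℤ) (Y : CochainComplex A ℤ)
    (hY : ∀ i j, Y.d i j = 0)
    (f : Q.obj ((HomologicalComplex.single A (ComplexShape.up ℤ) n).obj M) ⟶ Q.obj Y) :
    f = (f ≫ Q.map (piC Y hY n)) ≫ Q.map (iotaC Y hY n) +
      (f ≫ Q.map (piC Y hY (n-1))) ≫ Q.map (iotaC Y hY (n-1)) := by
  obtain ⟨R, h1, h2, s, hs, g, hg⟩ := two_term hhered M n Y f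
  have key : g = g ≫ (piC Y hY n ≫ iotaC Y hY n) + g ≫ (piC Y hY (n-1) ≫ iotaC Y hY (n-1)) := by
    ext k
    rw [HomologicalComplex.add_f_apply, HomologicalComplex.comp_f g,
      HomologicalComplex.comp_f g]
    by_cases hk : k = n
    · subst hk
      rw [pi_iota_f, pi_iota_f_ne _ _ _ _ (by omega), Category.comp_id, comp_zero, add_zero]
    · by_cases hk' : k = n - 1
      · subst hk'
        rw [pi_iota_f, pi_iota_f_ne _ _ _ _ (by omega), Category.comp_id, comp_zero, zero_add]
      · refine IsZero.eq_of_src ?_ _ _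
        by_cases h : n < k
        · exact R.isZero_of_isStrictlyLE n k h
        · exact R.isZero_of_isStrictlyGE (n-1) k (by omega)
  have is : IsIso (Q.map s) := inferInstance
  rw [← cancel_epi (Q.map s), Preadditive.comp_add, Category.assoc f, Category.assoc f,
    ← Category.assoc _ f, ← Category.assoc _ f, hg]
  conv_lhs => rw [key]
  rw [Q.map_add, Q.map_comp, Q.map_comp, Q.map_comp, Q.map_comp]

end

/-- Let `A` be a hereditary abelian category (`Ext²` vanishes
identically) and let `X`, `Y` be cochain complexes in `A` with zero differentials.
Then the natural map
`Hom_{D(A)}(X, Y) → ∏ₙ Hom(Σ⁻ⁿXⁿ, Σ⁻ⁿYⁿ) × ∏ₙ Hom(Σ⁻ⁿXⁿ, Σ⁻⁽ⁿ⁻¹⁾Yⁿ⁻¹)`, given by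
`f ↦ ((πₙ ∘ f ∘ ιₙ)ₙ, (πₙ₋₁ ∘ f ∘ ιₙ)ₙ)` where `ιₙ` and `πₙ` are the evident inclusion
and projection chain maps for the degree-`n` parts (single complexes placed in degree
`n`), is a bijection.  Under the identification
`Ext¹(Xⁿ, Yⁿ⁻¹) = Hom_{D(A)}(Σ⁻ⁿXⁿ, Σ⁻⁽ⁿ⁻¹⁾Yⁿ⁻¹)` this is the bijection
`Hom_{D(A)}(X, Y) ≅ ∏ₙ Hom_A(Xⁿ, Yⁿ) × ∏ₙ Ext¹_A(Xⁿ, Yⁿ⁻¹)`. -/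
theorem stmt_19 {A : Type u} [Category.{v} A] [Abelian A] [HasExt.{w} A]
    [HasDerivedCategory A]
    (hhered : ∀ M N : A, Subsingleton (Ext M N 2))
    (X Y : CochainComplex A ℤ) (hX : ∀ i j, X.d i j = 0) (hY : ∀ i j, Y.d i j = 0) :
    Function.Bijective
      (fun (f : DerivedCategory.Q.obj X ⟶ DerivedCategory.Q.obj Y) =>
        ((fun n : ℤ =>
            DerivedCategory.Q.map (HomologicalComplex.mkHomFromSingle (𝟙 (X.X n))
                (fun k _ => by rw [hX, comp_zero])) ≫ f ≫
              DerivedCategory.Q.map (HomologicalComplex.mkHomToSingle (𝟙 (Y.X n))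
                (fun i _ => by rw [hY, zero_comp]))),
         (fun n : ℤ =>
            DerivedCategory.Q.map (HomologicalComplex.mkHomFromSingle (𝟙 (X.X n))
                (fun k _ => by rw [hX, comp_zero])) ≫ f ≫
              DerivedCategory.Q.map (HomologicalComplex.mkHomToSingle (𝟙 (Y.X (n - 1)))
                (fun i _ => by rw [hY, zero_comp]))))) := by
  have e1 : ∀ n, DerivedCategory.Q.map (iotaC Y hY n) ≫ DerivedCategory.Q.map (piC Y hY n) = 𝟙 _ := by
    intro n
    rw [← DerivedCategory.Q.map_comp, iota_pi, DerivedCategory.Q.map_id]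
  have e2 : ∀ m n, m ≠ n →
      DerivedCategory.Q.map (iotaC Y hY m) ≫ DerivedCategory.Q.map (piC Y hY n) = 0 := by
    intro m n h
    rw [← DerivedCategory.Q.map_comp, iota_pi_ne _ _ _ _ h, Functor.map_zero]
  constructor
  · intro f₁ f₂ h
    have ha : ∀ n, DerivedCategory.Q.map (iotaC X hX n) ≫ f₁ ≫ DerivedCategory.Q.map (piC Y hY n) =
        DerivedCategory.Q.map (iotaC X hX n) ≫ f₂ ≫ DerivedCategory.Q.map (piC Y hY n) :=
      fun n => congrFun (congrArg Prod.fst h) n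
    have hb : ∀ n, DerivedCategory.Q.map (iotaC X hX n) ≫ f₁ ≫
          DerivedCategory.Q.map (piC Y hY (n-1)) =
        DerivedCategory.Q.map (iotaC X hX n) ≫ f₂ ≫ DerivedCategory.Q.map (piC Y hY (n-1)) :=
      fun n => congrFun (congrArg Prod.snd h) n
    rw [← sub_eq_zero]
    refine glue_inj hhered X hX Y _ (fun n => ?_)
    rw [Preadditive.comp_sub, sub_eq_zero,
      decomp hhered _ n Y hY (DerivedCategory.Q.map (iotaC X hX n) ≫ f₁),
      decomp hhered _ n Y hY (DerivedCategory.Q.map (iotaC X hX n) ≫ f₂),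
      Category.assoc _ f₁, Category.assoc _ f₁, Category.assoc _ f₂, Category.assoc _ f₂,
      ha, hb]
  · rintro ⟨a, b⟩
    obtain ⟨F, hF⟩ := glue_surj hhered X hX Y (fun n =>
      a n ≫ DerivedCategory.Q.map (iotaC Y hY n) +
        b n ≫ DerivedCategory.Q.map (iotaC Y hY (n-1)))
    refine ⟨F, Prod.ext (funext fun n => ?_) (funext fun n => ?_)⟩
    · change DerivedCategory.Q.map (iotaC X hX n) ≫ F ≫ DerivedCategory.Q.map (piC Y hY n) = a n
      rw [← Category.assoc, hF, Preadditive.add_comp, Category.assoc, Category.assoc, e1,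
        e2 _ _ (by omega), Category.comp_id, comp_zero, add_zero]
    · change DerivedCategory.Q.map (iotaC X hX n) ≫ F ≫
        DerivedCategory.Q.map (piC Y hY (n-1)) = b n
      rw [← Category.assoc, hF, Preadditive.add_comp, Category.assoc, Category.assoc, e1,
        e2 _ _ (by omega), Category.comp_id, comp_zero, zero_add]
end
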